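/- There exist constants p > 0 and C > 0 such that for every integer n ≥ 1, Fav(G_n) ≤ C · n^{-p}. -/

import Mathlib

open MeasureTheory

/-- Projection of a planar set onto the direction `θ`. -/
noncomputable def projDir (θ : ℝ) (E : Set ℂ) : Set ℝ :=
  (fun z : ℂ => (Complex.exp (-(θ : ℂ) * Complex.I) * z).re) '' E

/-- Favard length: the average over directions of the length of the projection. -/
noncomputable def fav (E : Set ℂ) : ℝ :=
  (1 / Real.pi) * ∫ θ in (0:ℝ)..Real.pi, (volume (projDir θ E)).toReal

/-- The center `z_α` of the disc indexed by `α ∈ {-1,0,1}^n`. -/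
noncomputable def gasketCenter (n : ℕ) (α : Fin n → ℤ) : ℂ :=
  ∑ k : Fin n, (3 : ℂ) ^ (-(k.1 + 1 : ℤ)) *
    Complex.exp (Complex.I * (Real.pi : ℂ) * ((1/2 : ℂ) + (2/3 : ℂ) * (α k : ℂ)))

/-- The disc model `G_n` of the `n`-th Sierpinski gasket approximation. -/
noncomputable def gasket (n : ℕ) : Set ℂ :=
  ⋃ α ∈ {α : Fin n → ℤ | ∀ k, α k = -1 ∨ α k = 0 ∨ α k = 1},
    Metric.ball (gasketCenter n α) ((3 : ℝ) ^ (-(n : ℤ)))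


namespace GF

/-- position of a word -/
noncomputable def pt (a : Fin 3 → ℝ) : List (Fin 3) → ℝ
  | [] => 0
  | j :: w => (a j + pt a w) / 3

/-- words of length n -/
def W : ℕ → Finset (List (Fin 3))
  | 0 => {[]}
  | n + 1 => (Finset.univ ×ˢ W n).image (fun p : Fin 3 × List (Fin 3) => p.1 :: p.2)

lemma mem_W {n : ℕ} {w : List (Fin 3)} : w ∈ W n ↔ w.length = n := by
  induction n generalizing w with
  | zero => simp [W]
  | succ n ih =>
    cases w with
    | nil => simp [W]
    | cons j w => simp [W, ih]

lemma cons_inj_on (n : ℕ) : Set.InjOn (fun p : Fin 3 × List (Fin 3) => p.1 :: p.2)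
    ((Finset.univ ×ˢ W n : Finset (Fin 3 × List (Fin 3))) : Set (Fin 3 × List (Fin 3))) := by
  rintro ⟨a, b⟩ _ ⟨c, d⟩ _ h
  simpa using h

lemma sum_W_succ {M : Type*} [AddCommMonoid M] (n : ℕ) (F : List (Fin 3) → M) :
    ∑ w ∈ W (n + 1), F w = ∑ j : Fin 3, ∑ w ∈ W n, F (j :: w) := by
  rw [W, Finset.sum_image (cons_inj_on n), Finset.sum_product]

lemma card_W (n : ℕ) : (W n).card = 3 ^ n := by
  induction n with
  | zero => simp [W]
  | succ n ih =>
    rw [W, Finset.card_image_of_injOn (cons_inj_on n), Finset.card_product, ih]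
    simp [pow_succ, mul_comm]

lemma pt_append (a : Fin 3 → ℝ) (u v : List (Fin 3)) :
    pt a (u ++ v) = pt a u + pt a v / 3 ^ u.length := by
  induction u with
  | nil => simp [pt]
  | cons j u ih =>
    simp only [List.cons_append, pt, ih, List.length_cons, pow_succ]
    field_simp
    ring

lemma abs_pt_le {a : Fin 3 → ℝ} (ha : ∀ j, |a j| ≤ 1) (w : List (Fin 3)) :
    |pt a w| ≤ (1 - ((3:ℝ) ^ w.length)⁻¹) / 2 := by
  induction w with
  | nil => simp [pt]
  | cons j w ih =>
    simp only [pt, List.length_cons, pow_succ, mul_inv]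
    have h1 := ha j
    rw [abs_le] at *
    constructor <;> linarith

/-- the covering count -/
noncomputable def cnt (a : Fin 3 → ℝ) (n : ℕ) (x : ℝ) : ℕ :=
  ((W n).filter (fun v => |x - pt a v| ≤ ((3:ℝ) ^ n)⁻¹)).card

/-- nestedness -/
lemma nested {a : Fin 3 → ℝ} (ha : ∀ j, |a j| ≤ 1) (u v : List (Fin 3)) {x : ℝ}
    (h : |x - pt a (u ++ v)| ≤ ((3:ℝ) ^ (u ++ v).length)⁻¹) :
    |x - pt a u| ≤ ((3:ℝ) ^ u.length)⁻¹ := by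
  rw [pt_append, List.length_append, pow_add, mul_inv] at h
  have h1 := abs_pt_le ha v
  have h3 : (0:ℝ) < ((3:ℝ) ^ u.length)⁻¹ := by positivity
  set r := ((3:ℝ) ^ u.length)⁻¹ with hr
  set s := ((3:ℝ) ^ v.length)⁻¹ with hs
  have hs1 : s ≤ 1 := by
    rw [hs]; exact inv_le_one_of_one_le₀ (one_le_pow₀ (by norm_num))
  rw [div_eq_mul_inv, ← hr] at h
  have : |x - pt a u| ≤ |x - (pt a u + pt a v * r)| + |pt a v * r| := by
    have := abs_add_le (x - (pt a u + pt a v * r)) (pt a v * r)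
    ring_nf at this ⊢
    linarith
  rw [abs_mul, abs_of_pos h3] at this
  nlinarith

lemma cnt_zero_le (a : Fin 3 → ℝ) (x : ℝ) : cnt a 0 x ≤ 1 := by
  unfold cnt
  exact (Finset.card_filter_le _ _).trans (by simp [W])

/-- scaling of the tile condition -/
lemma tile_append (a : Fin 3 → ℝ) (u v : List (Fin 3)) (x : ℝ) :
    |x - pt a (u ++ v)| ≤ ((3:ℝ) ^ (u ++ v).length)⁻¹ ↔
    |3 ^ u.length * (x - pt a u) - pt a v| ≤ ((3:ℝ) ^ v.length)⁻¹ := by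
  rw [pt_append, List.length_append, pow_add, mul_inv]
  have h3 : (0:ℝ) < ((3:ℝ) ^ u.length) := by positivity
  set r := ((3:ℝ) ^ u.length) with hr
  have : r * (x - pt a u) - pt a v = r * (x - (pt a u + pt a v / r)) := by
    field_simp
    ring
  rw [this, abs_mul, abs_of_pos h3, inv_mul_eq_div, le_div_iff₀ h3, mul_comm r]

/-- tile -/
def I (a : Fin 3 → ℝ) (n : ℕ) (w : List (Fin 3)) : Set ℝ :=
  Metric.closedBall (pt a w) ((3:ℝ) ^ n)⁻¹

lemma mem_I {a : Fin 3 → ℝ} {n : ℕ} {w : List (Fin 3)} {x : ℝ} :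
    x ∈ I a n w ↔ |x - pt a w| ≤ ((3:ℝ) ^ n)⁻¹ := by
  simp [I, Metric.mem_closedBall, Real.dist_eq]

/-- level-n union of tiles -/
def U (a : Fin 3 → ℝ) (n : ℕ) : Set ℝ := ⋃ w ∈ W n, I a n w

/-- heavy words -/
def Heavy (a : Fin 3 → ℝ) (K : ℝ) (u : List (Fin 3)) : Prop :=
  ∃ x, |x - pt a u| ≤ ((3:ℝ) ^ u.length)⁻¹ ∧ K ≤ cnt a u.length x

open Classical in
/-- length N words with a heavy prefix -/
noncomputable def H (a : Fin 3 → ℝ) (K : ℝ) (N : ℕ) : Finset (List (Fin 3)) :=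
  (W N).filter (fun w => ∃ l ≤ N, Heavy a K (w.take l))

/-- first heavy -/
def FH (a : Fin 3 → ℝ) (K : ℝ) (u : List (Fin 3)) : Prop :=
  Heavy a K u ∧ ∀ l < u.length, ¬ Heavy a K (u.take l)

end GF
namespace GF

/-- all words of length at most N -/
def WL (N : ℕ) : Finset (List (Fin 3)) := (Finset.range (N + 1)).biUnion W

lemma mem_WL {N : ℕ} {u : List (Fin 3)} : u ∈ WL N ↔ u.length ≤ N := by
  simp [WL, mem_W]

/-- the extensions of u to length N -/
def Ext (N : ℕ) (u : List (Fin 3)) : Finset (List (Fin 3)) :=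
  (W (N - u.length)).image (fun v => u ++ v)

lemma card_Ext (N : ℕ) (u : List (Fin 3)) : (Ext N u).card = 3 ^ (N - u.length) := by
  rw [Ext, Finset.card_image_of_injective _ (List.append_right_injective u), card_W]

lemma mem_Ext {N : ℕ} {u w : List (Fin 3)} (hu : u.length ≤ N) :
    w ∈ Ext N u ↔ w.length = N ∧ w.take u.length = u := by
  simp only [Ext, Finset.mem_image, mem_W]
  constructor
  · rintro ⟨v, hv, rfl⟩
    simp [hv]; omega
  · rintro ⟨h1, h2⟩
    refine ⟨w.drop u.length, by simp [h1], ?_⟩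
    have := List.take_append_drop u.length w
    rwa [h2] at this

lemma pow_sub_eq {N l : ℕ} (h : l ≤ N) : ((3 ^ (N - l) : ℕ) : ℝ) = 3 ^ N * ((3:ℝ) ^ l)⁻¹ := by
  push_cast
  rw [pow_sub₀ _ (by norm_num) h]

lemma mem_H {a : Fin 3 → ℝ} {K : ℝ} {N : ℕ} {w : List (Fin 3)} :
    w ∈ H a K N ↔ w.length = N ∧ ∃ l ≤ N, Heavy a K (w.take l) := by
  simp [H, mem_W]

open Classical in
lemma sum_FH_le (a : Fin 3 → ℝ) (K : ℝ) (N : ℕ) :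
    ∑ u ∈ (WL N).filter (FH a K), ((3:ℝ) ^ u.length)⁻¹ ≤ (H a K N).card / 3 ^ N := by
  have h1 : ((WL N).filter (FH a K)).biUnion (Ext N) ⊆ H a K N := by
    intro w hw
    simp only [Finset.mem_biUnion, Finset.mem_filter, mem_WL] at hw
    obtain ⟨u, ⟨hu, hf⟩, hw⟩ := hw
    rw [mem_Ext hu] at hw
    rw [mem_H]
    exact ⟨hw.1, u.length, hu, by rw [hw.2]; exact hf.1⟩
  have h2 := Finset.card_le_card h1
  rw [Finset.card_biUnion] at h2
  · rw [le_div_iff₀ (by positivity), Finset.sum_mul]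
    have h3 : ((∑ u ∈ (WL N).filter (FH a K), (Ext N u).card : ℕ) : ℝ) ≤ (H a K N).card := by
      exact_mod_cast h2
    refine le_trans (le_of_eq ?_) h3
    rw [Nat.cast_sum]
    refine Finset.sum_congr rfl fun u hu => ?_
    simp only [Finset.mem_filter, mem_WL] at hu
    rw [card_Ext, pow_sub_eq hu.1, mul_comm]
  · intro u hu v hv huv
    refine Finset.disjoint_left.2 ?_
    intro w hwu hwv
    simp only [Finset.mem_coe, Finset.mem_filter, mem_WL] at hu hv
    rw [mem_Ext hu.1] at hwu
    rw [mem_Ext hv.1] at hwv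
    rcases lt_trichotomy u.length v.length with h | h | h
    · apply hv.2.2 _ h
      rw [← hwv.2, List.take_take, min_eq_left h.le, hwu.2]
      exact hu.2.1
    · apply huv
      rw [← hwu.2, ← hwv.2, h]
    · apply hu.2.2 _ h
      rw [← hwu.2, List.take_take, min_eq_left h.le, hwv.2]
      exact hv.2.1

open Classical in
lemma volume_heavy {a : Fin 3 → ℝ} (ha : ∀ j, |a j| ≤ 1) {K : ℝ} (hK : 0 < K) (N : ℕ) :
    volume (⋃ w ∈ H a K N, I a N w) ≤
      ENNReal.ofReal (30 / K * ((H a K N).card / 3 ^ N)) := by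
  obtain ⟨t, ht, hdis, hcov⟩ := Vitali.exists_disjoint_subfamily_covering_enlargement_closedBall
    {u : List (Fin 3) | u.length ≤ N ∧ Heavy a K u} (pt a) (fun u => 3 * ((3:ℝ) ^ u.length)⁻¹) 3
    (fun u _ => by
      have : ((3:ℝ) ^ u.length)⁻¹ ≤ 1 := inv_le_one_of_one_le₀ (one_le_pow₀ (by norm_num))
      linarith) 5 (by norm_num)
  set T : Finset (List (Fin 3)) := (WL N).filter (· ∈ t) with hT
  have hTt : ∀ u, u ∈ T ↔ u ∈ t := by
    intro u
    simp only [hT, Finset.mem_filter, mem_WL, and_iff_right_iff_imp]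
    exact fun h => (ht h).1
  have key : ∑ u ∈ T, K * ((3:ℝ) ^ u.length)⁻¹ ≤ (H a K N).card / 3 ^ N := by
    have hch : ∀ u ∈ T, ∃ x, |x - pt a u| ≤ ((3:ℝ) ^ u.length)⁻¹ ∧ K ≤ cnt a u.length x :=
      fun u hu => (ht ((hTt u).1 hu)).2
    choose! X hX1 hX2 using hch
    set S : List (Fin 3) → Finset (List (Fin 3)) := fun u =>
      ((W u.length).filter (fun v => |X u - pt a v| ≤ ((3:ℝ) ^ u.length)⁻¹)).biUnion (Ext N)
      with hS
    have hlen : ∀ u ∈ T, u.length ≤ N := fun u hu => (ht ((hTt u).1 hu)).1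
    have hScard : ∀ u ∈ T, (S u).card = cnt a u.length (X u) * 3 ^ (N - u.length) := by
      intro u hu
      rw [hS]
      simp only
      rw [Finset.card_biUnion]
      · rw [cnt, Finset.sum_const_nat]
        intro v hv
        simp only [Finset.mem_filter, mem_W] at hv
        rw [card_Ext, hv.1]
      · intro v hv v' hv' hne
        simp only [Finset.mem_coe, Finset.mem_filter, mem_W] at hv hv'
        refine Finset.disjoint_left.2 ?_
        intro w hw hw'
        rw [mem_Ext (hv.1 ▸ hlen u hu)] at hw
        rw [mem_Ext (hv'.1 ▸ hlen u hu)] at hw'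
        apply hne
        rw [← hw.2, ← hw'.2, hv.1, hv'.1]
    have hSH : T.biUnion S ⊆ H a K N := by
      intro w hw
      simp only [Finset.mem_biUnion, hS, Finset.mem_filter, mem_W] at hw
      obtain ⟨u, hu, v, ⟨hv, hxv⟩, hw⟩ := hw
      rw [mem_Ext (hv ▸ hlen u hu)] at hw
      rw [mem_H]
      refine ⟨hw.1, v.length, hv ▸ hlen u hu, ?_⟩
      rw [hw.2]
      exact ⟨X u, by rw [hv]; exact hxv, by rw [hv]; exact hX2 u hu⟩
    have hloc : ∀ u ∈ T, ∀ w ∈ S u, pt a w ∈ Metric.closedBall (pt a u) (3 * ((3:ℝ) ^ u.length)⁻¹) := by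
      intro u hu w hw
      simp only [Finset.mem_biUnion, hS, Finset.mem_filter, mem_W] at hw
      obtain ⟨v, ⟨hv, hxv⟩, hw⟩ := hw
      simp only [Ext, Finset.mem_image] at hw
      obtain ⟨z, _, rfl⟩ := hw
      have h1 : |pt a (v ++ z) - pt a v| ≤ ((3:ℝ) ^ u.length)⁻¹ := by
        rw [← hv]
        apply nested ha v z
        simp
      rw [Metric.mem_closedBall, Real.dist_eq]
      have h2 := hX1 u hu
      rw [abs_le] at *
      constructor <;> linarith
    have h2 := Finset.card_le_card hSH
    rw [Finset.card_biUnion] at h2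
    · rw [le_div_iff₀ (by positivity), Finset.sum_mul]
      have h3 : ((∑ u ∈ T, (S u).card : ℕ) : ℝ) ≤ (H a K N).card := by exact_mod_cast h2
      refine le_trans ?_ h3
      rw [Nat.cast_sum]
      refine Finset.sum_le_sum fun u hu => ?_
      rw [hScard u hu, Nat.cast_mul, pow_sub_eq (hlen u hu)]
      calc K * ((3:ℝ) ^ u.length)⁻¹ * 3 ^ N = K * (3 ^ N * ((3:ℝ) ^ u.length)⁻¹) := by ring
        _ ≤ _ := mul_le_mul_of_nonneg_right (hX2 u hu) (by positivity)
    · intro u hu v hv huv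
      refine Finset.disjoint_left.2 ?_
      intro w hwu hwv
      have := hdis ((hTt u).1 hu) ((hTt v).1 hv) huv
      exact Set.disjoint_left.1 this (hloc u hu w hwu) (hloc v hv w hwv)
  have hsub : (⋃ w ∈ H a K N, I a N w) ⊆
      ⋃ u ∈ T, Metric.closedBall (pt a u) (5 * (3 * ((3:ℝ) ^ u.length)⁻¹)) := by
    intro x hx
    simp only [Set.mem_iUnion] at hx ⊢
    obtain ⟨w, hw, hx⟩ := hx
    rw [mem_H] at hw
    obtain ⟨hw, l, hl, hh⟩ := hw
    have hlen : (w.take l).length = l := by simp; omega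
    obtain ⟨b, hb, hb2⟩ := hcov (w.take l) ⟨by rw [hlen]; exact hl, hh⟩
    refine ⟨b, (hTt b).2 hb, hb2 ?_⟩
    rw [Metric.mem_closedBall, Real.dist_eq]
    have : |x - pt a (w.take l)| ≤ ((3:ℝ) ^ (w.take l).length)⁻¹ := by
      apply nested ha (w.take l) (w.drop l)
      rw [List.take_append_drop, hw]
      exact mem_I.1 hx
    have h0 : (0:ℝ) < ((3:ℝ) ^ (w.take l).length)⁻¹ := by positivity
    linarith
  calc volume (⋃ w ∈ H a K N, I a N w) ≤ _ := measure_mono hsub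
    _ ≤ ∑ u ∈ T, volume (Metric.closedBall (pt a u) (5 * (3 * ((3:ℝ) ^ u.length)⁻¹))) :=
        measure_biUnion_finset_le _ _
    _ = ∑ u ∈ T, ENNReal.ofReal (30 / K * (K * ((3:ℝ) ^ u.length)⁻¹)) := by
        refine Finset.sum_congr rfl fun u _ => ?_
        rw [Real.volume_closedBall]
        congr 1
        field_simp
        norm_num
    _ = ENNReal.ofReal (∑ u ∈ T, 30 / K * (K * ((3:ℝ) ^ u.length)⁻¹)) := by
        rw [ENNReal.ofReal_sum_of_nonneg]
        intro u _
        positivity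
    _ ≤ _ := by
        apply ENNReal.ofReal_le_ofReal
        rw [← Finset.mul_sum]
        exact mul_le_mul_of_nonneg_left key (by positivity)

lemma volume_U_le (a : Fin 3 → ℝ) (n : ℕ) : volume (U a n) ≤ 2 := by
  refine (measure_biUnion_finset_le _ _).trans ?_
  simp only [I, Real.volume_closedBall, Finset.sum_const, card_W]
  rw [nsmul_eq_mul, ← ENNReal.ofReal_natCast, ← ENNReal.ofReal_mul (by positivity),
    show (2 : ENNReal) = ENNReal.ofReal 2 by simp]
  apply ENNReal.ofReal_le_ofReal
  push_cast
  field_simp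
  rfl

lemma U_step {a : Fin 3 → ℝ} (ha : ∀ j, |a j| ≤ 1) {n k : ℕ} (h : n ≤ k) : U a k ⊆ U a n := by
  intro x hx
  simp only [U, Set.mem_iUnion, mem_W] at hx ⊢
  obtain ⟨w, hw, hx⟩ := hx
  have hl : (w.take n).length = n := by simp; omega
  refine ⟨w.take n, hl, ?_⟩
  rw [mem_I]
  have := nested ha (w.take n) (w.drop n) (x := x) (by
    rw [List.take_append_drop, hw]; exact mem_I.1 hx)
  rwa [hl] at this

/-- real valued length -/
noncomputable def L (a : Fin 3 → ℝ) (n : ℕ) : ℝ := (volume (U a n)).toReal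

lemma vol_U_eq (a : Fin 3 → ℝ) (n : ℕ) : volume (U a n) = ENNReal.ofReal (L a n) := by
  rw [L, ENNReal.ofReal_toReal]
  exact ne_top_of_le_ne_top (by simp) (volume_U_le a n)

lemma L_rec {a : Fin 3 → ℝ} (ha : ∀ j, |a j| ≤ 1) {K : ℝ} (hK : 0 < K) (N M : ℕ) :
    L a (N + M) ≤ 30 / K * ((H a K N).card / 3 ^ N) +
      (1 - (H a K N).card / 3 ^ N) * L a M := by
  classical
  have hL0 : 0 ≤ L a M := ENNReal.toReal_nonneg
  have hcard : ((W N \ H a K N).card : ℝ) = 3 ^ N - (H a K N).card := by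
    have hs : H a K N ⊆ W N := Finset.filter_subset _ _
    rw [Finset.card_sdiff_of_subset hs, Nat.cast_sub (Finset.card_le_card hs), card_W]
    push_cast
    rfl
  have hsub : U a (N + M) ⊆ (⋃ w ∈ H a K N, I a N w) ∪
      ⋃ w ∈ W N \ H a K N, (fun x => 3 ^ N * (x - pt a w)) ⁻¹' (U a M) := by
    intro x hx
    simp only [U, Set.mem_iUnion, mem_W] at hx
    obtain ⟨w, hw, hx⟩ := hx
    have hl : (w.take N).length = N := by simp; omega
    have hd : (w.drop N).length = M := by simp; omega
    have hx' : |x - pt a (w.take N ++ w.drop N)| ≤ ((3:ℝ) ^ (w.take N ++ w.drop N).length)⁻¹ := by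
      rw [List.take_append_drop, hw]; exact mem_I.1 hx
    by_cases hH : w.take N ∈ H a K N
    · left
      simp only [Set.mem_iUnion]
      refine ⟨_, hH, ?_⟩
      have := nested ha _ _ hx'
      rw [hl] at this
      exact mem_I.2 this
    · right
      simp only [Set.mem_iUnion]
      refine ⟨w.take N, by simp only [Finset.mem_sdiff, mem_W]; exact ⟨hl, hH⟩, ?_⟩
      simp only [Set.mem_preimage, U, Set.mem_iUnion]
      refine ⟨w.drop N, mem_W.2 hd, ?_⟩
      rw [tile_append, hl, hd] at hx'
      exact mem_I.2 hx'
  have hpre : ∀ w, volume ((fun x => 3 ^ N * (x - pt a w)) ⁻¹' (U a M)) =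
      ENNReal.ofReal (((3:ℝ) ^ N)⁻¹ * L a M) := by
    intro w
    have : (fun x => 3 ^ N * (x - pt a w)) ⁻¹' (U a M) =
      (fun x => x - pt a w) ⁻¹' ((fun x => (3:ℝ) ^ N * x) ⁻¹' (U a M)) := rfl
    have h2 : ∀ s : Set ℝ, volume ((fun x => x - pt a w) ⁻¹' s) = volume s := fun s => by
      simp only [sub_eq_add_neg]
      exact measure_preimage_add_right volume (-pt a w) s
    rw [this, h2, Real.volume_preimage_mul_left (by positivity), vol_U_eq,
      ← ENNReal.ofReal_mul (by positivity), abs_of_pos (by positivity)]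
  have : volume (U a (N + M)) ≤ ENNReal.ofReal (30 / K * ((H a K N).card / 3 ^ N) +
      (1 - (H a K N).card / 3 ^ N) * L a M) := by
    refine (measure_mono hsub).trans ((measure_union_le _ _).trans ?_)
    have h1 : (0:ℝ) ≤ (1 - (H a K N).card / 3 ^ N) * L a M := by
      apply mul_nonneg _ hL0
      rw [sub_nonneg, div_le_one (by positivity)]
      have : (0:ℝ) ≤ ((W N \ H a K N).card : ℝ) := by positivity
      linarith
    rw [ENNReal.ofReal_add (by positivity) h1]
    refine add_le_add (volume_heavy ha hK N) ?_
    refine (measure_biUnion_finset_le _ _).trans ?_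
    simp only [hpre, Finset.sum_const]
    rw [nsmul_eq_mul, ← ENNReal.ofReal_natCast, ← ENNReal.ofReal_mul (by positivity)]
    apply ENNReal.ofReal_le_ofReal
    rw [hcard]
    apply le_of_eq
    field_simp
  rw [L]
  refine ENNReal.toReal_le_of_le_ofReal ?_ this
  by_contra hneg
  push Not at hneg
  rw [ENNReal.ofReal_of_nonpos hneg.le] at this
  have h1 : (0:ℝ) ≤ (1 - (H a K N).card / 3 ^ N) * L a M := by
    apply mul_nonneg _ hL0
    rw [sub_nonneg, div_le_one (by positivity)]
    have : (0:ℝ) ≤ ((W N \ H a K N).card : ℝ) := by positivity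
    linarith
  have : 0 ≤ 30 / K * ((H a K N).card / 3 ^ N) := by positivity
  linarith

lemma L_iter {a : Fin 3 → ℝ} (ha : ∀ j, |a j| ≤ 1) {K : ℝ} (hK : 0 < K) (N : ℕ) (j : ℕ) :
    L a (j * N) ≤ 30 / K + (1 - (H a K N).card / 3 ^ N : ℝ) ^ j * 2 := by
  classical
  have hρ1 : ((H a K N).card / 3 ^ N : ℝ) ≤ 1 := by
    rw [div_le_one (by positivity)]
    have : (H a K N).card ≤ (W N).card := Finset.card_le_card (Finset.filter_subset _ _)
    rw [card_W] at this
    exact_mod_cast this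
  induction j with
  | zero =>
    have : L a (0 * N) ≤ 2 := by
      rw [L]
      exact ENNReal.toReal_le_of_le_ofReal (by norm_num) (by simpa using volume_U_le a _)
    have : 0 ≤ 30 / K := by positivity
    simp at *
    linarith
  | succ j ih =>
    have h := L_rec ha hK N (j * N)
    rw [show (j + 1) * N = N + j * N by ring]
    set ρ := ((H a K N).card / 3 ^ N : ℝ)
    have h2 : (1 - ρ) * L a (j * N) ≤ (1 - ρ) * (30 / K + (1 - ρ) ^ j * 2) :=
      mul_le_mul_of_nonneg_left ih (by linarith)
    rw [pow_succ]
    linarith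

end GF
namespace GF

lemma cnt_eq_sum (a : Fin 3 → ℝ) (n : ℕ) (x : ℝ) :
    (cnt a n x : ℝ) = ∑ w ∈ W n, (I a n w).indicator (fun _ => (1:ℝ)) x := by
  classical
  rw [cnt, Finset.card_filter, Nat.cast_sum]
  refine Finset.sum_congr rfl fun w _ => ?_
  by_cases h : |x - pt a w| ≤ ((3:ℝ) ^ n)⁻¹
  · rw [Set.indicator_of_mem (mem_I.2 h)]; simp [h]
  · rw [Set.indicator_of_notMem (fun h' => h (mem_I.1 h'))]; simp [h]

lemma cnt_memLp (a : Fin 3 → ℝ) (n : ℕ) (p : ENNReal) :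
    MemLp (fun x => (cnt a n x : ℝ)) p volume := by
  simp only [cnt_eq_sum]
  refine memLp_finsetSum _ fun w _ => ?_
  refine memLp_indicator_const p measurableSet_closedBall 1 (Or.inr ?_)
  exact measure_closedBall_lt_top.ne

lemma cnt_integrable (a : Fin 3 → ℝ) (n : ℕ) :
    Integrable (fun x => (cnt a n x : ℝ)) volume :=
  memLp_one_iff_integrable.1 (cnt_memLp a n 1)

lemma cnt_sq_integrable (a : Fin 3 → ℝ) (n : ℕ) :
    Integrable (fun x => (cnt a n x : ℝ) ^ 2) volume :=
  (cnt_memLp a n 2).integrable_sq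

lemma integral_cnt (a : Fin 3 → ℝ) (n : ℕ) : ∫ x, (cnt a n x : ℝ) = 2 := by
  simp only [cnt_eq_sum]
  rw [integral_finsetSum]
  · have : ∀ w ∈ W n, ∫ x, (I a n w).indicator (fun _ => (1:ℝ)) x = 2 * ((3:ℝ) ^ n)⁻¹ := by
      intro w _
      rw [integral_indicator_const _ (show MeasurableSet (I a n w) from measurableSet_closedBall)]
      simp [I, Measure.real, Real.volume_closedBall]
    rw [Finset.sum_congr rfl this, Finset.sum_const, card_W, nsmul_eq_mul]
    push_cast
    field_simp
  · intro w _
    refine (integrable_indicator_iff measurableSet_closedBall).2 ?_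
    exact integrableOn_const measure_closedBall_lt_top.ne

lemma scaled_integrable (a : Fin 3 → ℝ) (k l : ℕ) (c : ℝ) :
    Integrable (fun x => (cnt a k (3 ^ l * (x - c)) : ℝ) ^ 2) volume := by
  have h := (cnt_sq_integrable a k).comp_mul_left' (R := (3:ℝ) ^ l) (by positivity)
  exact h.comp_sub_right c

lemma scaled_integral (a : Fin 3 → ℝ) (k l : ℕ) (c : ℝ) :
    ∫ x, (cnt a k (3 ^ l * (x - c)) : ℝ) ^ 2 = ((3:ℝ) ^ l)⁻¹ * ∫ x, (cnt a k x : ℝ) ^ 2 := by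
  rw [integral_sub_right_eq_self (fun x => (cnt a k (3 ^ l * x) : ℝ) ^ 2) c,
    Measure.integral_comp_mul_left (fun x => (cnt a k x : ℝ) ^ 2), abs_of_pos (by positivity),
    smul_eq_mul]

open Classical in
/-- first heavy words of length at most n -/
noncomputable def FHs (a : Fin 3 → ℝ) (K : ℝ) (n : ℕ) : Finset (List (Fin 3)) :=
  (WL n).filter (FH a K)

lemma mem_FHs {a : Fin 3 → ℝ} {K : ℝ} {n : ℕ} {u : List (Fin 3)} :
    u ∈ FHs a K n ↔ u.length ≤ n ∧ FH a K u := by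
  simp [FHs, mem_WL]

lemma not_FH_nil {a : Fin 3 → ℝ} {K : ℝ} (hK : 1 < K) : ¬ FH a K [] := by
  rintro ⟨⟨x, -, hx⟩, -⟩
  have := cnt_zero_le a x
  have h2 : ((cnt a 0 x : ℕ) : ℝ) ≤ 1 := by exact_mod_cast this
  simp at hx
  linarith

lemma exists_FH_take {a : Fin 3 → ℝ} {K : ℝ} (w : List (Fin 3))
    (h : ∃ l ≤ w.length, Heavy a K (w.take l)) : ∃ l ≤ w.length, FH a K (w.take l) := by
  classical
  have hP : ∃ l, l ≤ w.length ∧ Heavy a K (w.take l) := h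
  refine ⟨Nat.find hP, (Nat.find_spec hP).1, (Nat.find_spec hP).2, ?_⟩
  intro l hl hh
  have hl' : l < Nat.find hP := lt_of_lt_of_le hl (by simp)
  rw [List.take_take, min_eq_left hl'.le] at hh
  exact Nat.find_min hP hl' ⟨hl'.le.trans (Nat.find_spec hP).1, hh⟩

open Classical in
/-- the non-heavy count -/
noncomputable def gcnt (a : Fin 3 → ℝ) (K : ℝ) (n : ℕ) (x : ℝ) : ℕ :=
  ((W n).filter (fun v => |x - pt a v| ≤ ((3:ℝ) ^ n)⁻¹ ∧ ¬ ∃ l ≤ n, Heavy a K (v.take l))).card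

lemma gcnt_le_cnt (a : Fin 3 → ℝ) (K : ℝ) (n : ℕ) (x : ℝ) : gcnt a K n x ≤ cnt a n x := by
  classical
  unfold gcnt cnt
  apply Finset.card_le_card
  intro v
  simp only [Finset.mem_filter]
  tauto

lemma gcnt_le_K {a : Fin 3 → ℝ} {K : ℝ} (hK : 0 < K) (n : ℕ) (x : ℝ) : (gcnt a K n x : ℝ) ≤ K := by
  classical
  by_cases h : gcnt a K n x = 0
  · rw [h]; simpa using hK.le
  · unfold gcnt at h
    rw [← Ne, Finset.card_ne_zero] at h
    obtain ⟨v, hv⟩ := h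
    simp only [Finset.mem_filter, mem_W] at hv
    obtain ⟨hv1, hv2, hv3⟩ := hv
    have h1 : ¬ Heavy a K v := fun hh => hv3 ⟨n, le_rfl, by rw [← hv1, List.take_length]; exact hh⟩
    have h2 : (gcnt a K n x : ℝ) ≤ cnt a n x := by exact_mod_cast gcnt_le_cnt a K n x
    by_contra hcon
    push Not at hcon
    exact h1 ⟨x, by rw [hv1]; exact hv2, by rw [hv1]; linarith⟩

lemma cnt_le_split (a : Fin 3 → ℝ) (K : ℝ) (n : ℕ) (x : ℝ) :
    cnt a n x ≤ gcnt a K n x +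
      ∑ u ∈ FHs a K n, cnt a (n - u.length) (3 ^ u.length * (x - pt a u)) := by
  classical
  have hsub : (W n).filter (fun v => |x - pt a v| ≤ ((3:ℝ) ^ n)⁻¹) ⊆
      (W n).filter (fun v => |x - pt a v| ≤ ((3:ℝ) ^ n)⁻¹ ∧ ¬ ∃ l ≤ n, Heavy a K (v.take l)) ∪
      (FHs a K n).biUnion (fun u => ((W (n - u.length)).filter
        (fun v => |3 ^ u.length * (x - pt a u) - pt a v| ≤ ((3:ℝ) ^ (n - u.length))⁻¹)).image
          (fun v => u ++ v)) := by
    intro w hw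
    simp only [Finset.mem_filter, mem_W, Finset.mem_union, Finset.mem_biUnion, Finset.mem_image]
      at hw ⊢
    by_cases hh : ∃ l ≤ n, Heavy a K (w.take l)
    · right
      obtain ⟨l, hl, hf⟩ := exists_FH_take w (by rw [hw.1]; exact hh)
      have hlen : (w.take l).length = l := by simp; omega
      refine ⟨w.take l, mem_FHs.2 ⟨by rw [hlen, ← hw.1]; exact hl, hf⟩, w.drop l, ⟨?_, ?_⟩, ?_⟩
      · simp; omega
      · have h2 : (w.drop l).length = n - (w.take l).length := by simp; omega
        rw [← h2, ← tile_append, List.take_append_drop, hw.1]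
        exact hw.2
      · exact List.take_append_drop _ _
    · left
      exact ⟨hw.1, hw.2, hh⟩
  unfold cnt gcnt
  refine (Finset.card_le_card hsub).trans ((Finset.card_union_le _ _).trans ?_)
  refine Nat.add_le_add_left ?_ _
  refine Finset.card_biUnion_le.trans (Finset.sum_le_sum fun u _ => Finset.card_image_le)

lemma cnt_pos_imp {a : Fin 3 → ℝ} (ha : ∀ j, |a j| ≤ 1) {u : List (Fin 3)} {k : ℕ} {x : ℝ}
    (h : cnt a k (3 ^ u.length * (x - pt a u)) ≠ 0) : |x - pt a u| ≤ ((3:ℝ) ^ u.length)⁻¹ := by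
  unfold cnt at h
  rw [Finset.card_ne_zero] at h
  obtain ⟨v, hv⟩ := h
  simp only [Finset.mem_filter, mem_W] at hv
  obtain ⟨h1, h2⟩ := hv
  rw [← h1, ← tile_append] at h2
  exact nested ha _ _ h2

/-- overlap of first heavy words -/
lemma overlap {a : Fin 3 → ℝ} (ha : ∀ j, |a j| ≤ 1) {K : ℝ} (hK : 1 < K) (n : ℕ) (x : ℝ) :
    (((FHs a K n).filter (fun u => |x - pt a u| ≤ ((3:ℝ) ^ u.length)⁻¹)).card : ℝ)
      ≤ 3 * K * n := by
  classical
  have hsub : (FHs a K n).filter (fun u => |x - pt a u| ≤ ((3:ℝ) ^ u.length)⁻¹) ⊆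
      (Finset.range n).biUnion (fun l => (FHs a K n).filter
        (fun u => |x - pt a u| ≤ ((3:ℝ) ^ u.length)⁻¹ ∧ u.length = l + 1)) := by
    intro u hu
    simp only [Finset.mem_filter, mem_FHs, Finset.mem_biUnion, Finset.mem_range] at hu ⊢
    have : u ≠ [] := by
      rintro rfl
      exact not_FH_nil hK hu.1.2
    have hpos : 0 < u.length := List.length_pos_iff.2 this
    exact ⟨u.length - 1, by omega, hu.1, hu.2, by omega⟩
  have hlev : ∀ l ∈ Finset.range n, (((FHs a K n).filter
        (fun u => |x - pt a u| ≤ ((3:ℝ) ^ u.length)⁻¹ ∧ u.length = l + 1)).card : ℝ) ≤ 3 * K := by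
    intro l _
    set A := (FHs a K n).filter
        (fun u => |x - pt a u| ≤ ((3:ℝ) ^ u.length)⁻¹ ∧ u.length = l + 1) with hA
    rcases A.eq_empty_or_nonempty with h0 | ⟨u0, hu0⟩
    · rw [h0]; simp; linarith
    have hpar : ∀ u ∈ A, |x - pt a (u.take l)| ≤ ((3:ℝ) ^ l)⁻¹ ∧ (u.take l).length = l ∧
        ¬ Heavy a K (u.take l) := by
      intro u hu
      simp only [hA, Finset.mem_filter, mem_FHs] at hu
      obtain ⟨⟨h1, h2⟩, h3, h4⟩ := hu
      have hl : (u.take l).length = l := by simp; omega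
      refine ⟨?_, hl, h2.2 l (by omega)⟩
      have := nested ha (u.take l) (u.drop l) (x := x) (by rw [List.take_append_drop]; exact h3)
      rwa [hl] at this
    have hcnt : (cnt a l x : ℝ) ≤ K := by
      obtain ⟨h1, h2, h3⟩ := hpar u0 hu0
      by_contra hcon
      push Not at hcon
      exact h3 ⟨x, by rw [h2]; exact h1, by rw [h2]; exact hcon.le⟩
    have hAsub : A ⊆ (((W l).filter (fun v => |x - pt a v| ≤ ((3:ℝ) ^ l)⁻¹)) ×ˢ
        (Finset.univ : Finset (Fin 3))).image (fun p => p.1 ++ [p.2]) := by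
      intro u hu
      obtain ⟨h1, h2, h3⟩ := hpar u hu
      simp only [hA, Finset.mem_filter, mem_FHs] at hu
      have hl : l < u.length := by omega
      simp only [Finset.mem_image, Finset.mem_product, Finset.mem_filter, mem_W, Finset.mem_univ,
        and_true, Prod.exists]
      refine ⟨u.take l, u[l], ⟨h2, h1⟩, ?_⟩
      rw [List.take_append_getElem]
      have : l + 1 = u.length := by omega
      rw [this, List.take_length]
    have h1 := (Finset.card_le_card hAsub).trans Finset.card_image_le
    rw [Finset.card_product] at h1
    have h2 : (A.card : ℝ) ≤ cnt a l x * 3 := by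
      have : A.card ≤ cnt a l x * 3 := by simpa [cnt] using h1
      exact_mod_cast this
    linarith
  have h1 := (Finset.card_le_card hsub).trans Finset.card_biUnion_le
  calc _ ≤ ((∑ l ∈ Finset.range n, ((FHs a K n).filter
        (fun u => |x - pt a u| ≤ ((3:ℝ) ^ u.length)⁻¹ ∧ u.length = l + 1)).card : ℕ) : ℝ) := by
        exact_mod_cast h1
    _ ≤ ∑ l ∈ Finset.range n, 3 * K := by
        rw [Nat.cast_sum]
        exact Finset.sum_le_sum hlev
    _ = 3 * K * n := by simp; ring

lemma pointwise {a : Fin 3 → ℝ} (ha : ∀ j, |a j| ≤ 1) {K : ℝ} (hK : 1 < K) (n : ℕ) (x : ℝ) :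
    (cnt a n x : ℝ) ^ 2 ≤ 2 * K * cnt a n x + 6 * K * n *
      ∑ u ∈ FHs a K n, (cnt a (n - u.length) (3 ^ u.length * (x - pt a u)) : ℝ) ^ 2 := by
  classical
  set F : List (Fin 3) → ℝ := fun u => (cnt a (n - u.length) (3 ^ u.length * (x - pt a u)) : ℝ)
  have h1 : (cnt a n x : ℝ) ≤ gcnt a K n x + ∑ u ∈ FHs a K n, F u := by
    have := cnt_le_split a K n x
    have h2 : (cnt a n x : ℝ) ≤ ((gcnt a K n x +
      ∑ u ∈ FHs a K n, cnt a (n - u.length) (3 ^ u.length * (x - pt a u)) : ℕ) : ℝ) := by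
      exact_mod_cast this
    simpa [F] using h2
  have h2 : ∑ u ∈ FHs a K n, F u =
      ∑ u ∈ (FHs a K n).filter (fun u => |x - pt a u| ≤ ((3:ℝ) ^ u.length)⁻¹), F u := by
    symm
    apply Finset.sum_filter_of_ne
    intro u _ hne
    exact cnt_pos_imp (k := n - u.length) ha (fun h => hne (by simp [F, h]))
  have h3 : (∑ u ∈ FHs a K n, F u) ^ 2 ≤ 3 * K * n * ∑ u ∈ FHs a K n, F u ^ 2 := by
    rw [h2]
    refine sq_sum_le_card_mul_sum_sq.trans ?_
    refine mul_le_mul (overlap ha hK n x) ?_ ?_ (by positivity)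
    · exact Finset.sum_le_sum_of_subset_of_nonneg (Finset.filter_subset _ _)
        (fun _ _ _ => sq_nonneg _)
    · exact Finset.sum_nonneg fun _ _ => sq_nonneg _
  have h4 := gcnt_le_K (a := a) (K := K) (by linarith) n x
  have h5 : (gcnt a K n x : ℝ) ≤ cnt a n x := by exact_mod_cast gcnt_le_cnt a K n x
  have h6 : (0:ℝ) ≤ gcnt a K n x := by positivity
  have h7 : (0:ℝ) ≤ cnt a n x := by positivity
  have h8 : (gcnt a K n x : ℝ) ^ 2 ≤ K * cnt a n x := by nlinarith
  nlinarith [sq_nonneg ((gcnt a K n x : ℝ) - ∑ u ∈ FHs a K n, F u)]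

lemma energy {a : Fin 3 → ℝ} (ha : ∀ j, |a j| ≤ 1) {K : ℝ} (hK : 1 < K) (N : ℕ)
    (hρ : 12 * K * N * ((H a K N).card / 3 ^ N) ≤ 1) (n : ℕ) (hn : n ≤ N) :
    ∫ x, (cnt a n x : ℝ) ^ 2 ≤ 8 * K := by
  classical
  induction n using Nat.strong_induction_on with
  | _ n ih =>
  have hK0 : 0 < K := by linarith
  have hint : ∀ u ∈ FHs a K n, Integrable
      (fun x => (cnt a (n - u.length) (3 ^ u.length * (x - pt a u)) : ℝ) ^ 2) volume :=
    fun u _ => scaled_integrable a _ _ _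
  have h1 : ∫ x, (cnt a n x : ℝ) ^ 2 ≤ ∫ x, (2 * K * cnt a n x + 6 * K * n *
      ∑ u ∈ FHs a K n, (cnt a (n - u.length) (3 ^ u.length * (x - pt a u)) : ℝ) ^ 2) := by
    refine integral_mono (cnt_sq_integrable a n) ?_ (fun x => pointwise ha hK n x)
    exact ((cnt_integrable a n).const_mul _).add ((integrable_finsetSum _ hint).const_mul _)
  rw [integral_add ((cnt_integrable a n).const_mul _)
    ((integrable_finsetSum _ hint).const_mul _), integral_const_mul, integral_const_mul,
    integral_finsetSum _ hint, integral_cnt] at h1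
  have h2 : ∑ u ∈ FHs a K n, ∫ x, (cnt a (n - u.length) (3 ^ u.length * (x - pt a u)) : ℝ) ^ 2
      ≤ ∑ u ∈ FHs a K N, ((3:ℝ) ^ u.length)⁻¹ * (8 * K) := by
    have hs : FHs a K n ⊆ FHs a K N := by
      intro u
      simp only [mem_FHs]
      exact fun h => ⟨h.1.trans hn, h.2⟩
    refine le_trans (Finset.sum_le_sum (g := fun u => ((3:ℝ) ^ u.length)⁻¹ * (8 * K)) ?_)
      (Finset.sum_le_sum_of_subset_of_nonneg hs (fun _ _ _ => by positivity))
    intro u hu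
    rw [mem_FHs] at hu
    have : u ≠ [] := by
      rintro rfl
      exact not_FH_nil hK hu.2
    have hpos : 0 < u.length := List.length_pos_iff.2 this
    rw [scaled_integral]
    exact mul_le_mul_of_nonneg_left (ih _ (by omega) (by omega)) (by positivity)
  rw [← Finset.sum_mul] at h2
  have h3 : ∑ u ∈ FHs a K N, ((3:ℝ) ^ u.length)⁻¹ ≤ (H a K N).card / 3 ^ N := sum_FH_le a K N
  set ρ : ℝ := (H a K N).card / 3 ^ N
  set s := ∑ u ∈ FHs a K N, ((3:ℝ) ^ u.length)⁻¹
  have hs0 : 0 ≤ s := Finset.sum_nonneg fun _ _ => by positivity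
  have hnN : (n:ℝ) ≤ N := by exact_mod_cast hn
  have h4 : 6 * K * n * (s * (8 * K)) ≤ 4 * K := by
    calc 6 * K * n * (s * (8 * K)) ≤ 6 * K * N * (ρ * (8 * K)) := by gcongr
      _ = 4 * K * (12 * K * N * ρ) := by ring
      _ ≤ 4 * K * 1 := by gcongr
      _ = _ := by ring
  have h5 : 6 * K * n * ∑ u ∈ FHs a K n,
      ∫ x, (cnt a (n - u.length) (3 ^ u.length * (x - pt a u)) : ℝ) ^ 2
      ≤ 6 * K * n * (s * (8 * K)) := mul_le_mul_of_nonneg_left h2 (by positivity)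
  linarith

end GF
namespace GF

/-- normalized modulus of the mask -/
noncomputable def Phi (a : Fin 3 → ℝ) (ξ : ℝ) : ℝ :=
  ‖∑ j : Fin 3, Complex.exp (((a j * ξ : ℝ) : ℂ) * Complex.I)‖ / 3

/-- the Riesz-type product -/
noncomputable def R (a : Fin 3 → ℝ) (n : ℕ) (ξ : ℝ) : ℝ :=
  ∏ k ∈ Finset.range n, (Phi a (ξ / 3 ^ (k + 1))) ^ 2

lemma Phi_nonneg (a : Fin 3 → ℝ) (ξ : ℝ) : 0 ≤ Phi a ξ := by unfold Phi; positivity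

lemma R_nonneg (a : Fin 3 → ℝ) (n : ℕ) (ξ : ℝ) : 0 ≤ R a n ξ :=
  Finset.prod_nonneg fun _ _ => sq_nonneg _

lemma R_cont (a : Fin 3 → ℝ) (n : ℕ) : Continuous (R a n) := by
  unfold R Phi
  fun_prop

lemma R_add (a : Fin 3 → ℝ) (n m : ℕ) (ξ : ℝ) : R a (n + m) ξ = R a n ξ * R a m (ξ / 3 ^ n) := by
  unfold R
  rw [Finset.prod_range_add]
  congr 1
  refine Finset.prod_congr rfl fun k _ => ?_
  rw [div_div, ← pow_add, add_assoc]

lemma norm_S (a : Fin 3 → ℝ) (n : ℕ) (ξ : ℝ) :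
    ‖∑ w ∈ W n, Complex.exp (((pt a w * ξ : ℝ) : ℂ) * Complex.I)‖ ^ 2 = 9 ^ n * R a n ξ := by
  induction n generalizing ξ with
  | zero => simp [W, pt, R]
  | succ n ih =>
    have h : ∑ w ∈ W (n + 1), Complex.exp (((pt a w * ξ : ℝ) : ℂ) * Complex.I) =
        (∑ j : Fin 3, Complex.exp (((a j * (ξ / 3) : ℝ) : ℂ) * Complex.I)) *
        ∑ w ∈ W n, Complex.exp (((pt a w * (ξ / 3) : ℝ) : ℂ) * Complex.I) := by
      rw [sum_W_succ, Finset.sum_mul_sum]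
      refine Finset.sum_congr rfl fun j _ => Finset.sum_congr rfl fun w _ => ?_
      rw [← Complex.exp_add, pt]
      congr 1
      push_cast
      ring
    rw [h, norm_mul, mul_pow, ih, add_comm n 1, R_add]
    simp only [R, Phi, Finset.range_one, Finset.prod_singleton, zero_add, pow_one]
    ring

lemma norm_sq_sum (s : Finset (List (Fin 3))) (x : List (Fin 3) → ℝ) (ξ : ℝ) :
    ‖∑ w ∈ s, Complex.exp (((x w * ξ : ℝ) : ℂ) * Complex.I)‖ ^ 2 =
      ∑ w ∈ s, ∑ v ∈ s, Real.cos ((x w - x v) * ξ) := by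
  rw [Complex.sq_norm, Complex.normSq_apply, Complex.re_sum, Complex.im_sum]
  simp only [Complex.exp_ofReal_mul_I_re, Complex.exp_ofReal_mul_I_im]
  rw [Finset.sum_mul_sum, Finset.sum_mul_sum, ← Finset.sum_add_distrib]
  refine Finset.sum_congr rfl fun w _ => ?_
  rw [← Finset.sum_add_distrib]
  refine Finset.sum_congr rfl fun v _ => ?_
  rw [sub_mul, Real.cos_sub]

/-- Fejer integral -/
noncomputable def J (T b : ℝ) : ℝ := ∫ ξ in (0:ℝ)..T, (1 - ξ / T) * Real.cos (b * ξ)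

lemma J_zero {T : ℝ} (hT : 0 < T) : J T 0 = T / 2 := by
  have : ∀ x ∈ Set.uIcc 0 T, HasDerivAt (fun ξ => ξ - ξ ^ 2 / (2 * T))
      ((1 - x / T) * Real.cos (0 * x)) x := by
    intro x _
    have h := (hasDerivAt_id x).sub (((hasDerivAt_id x).pow 2).div_const (2 * T))
    refine h.congr_deriv ?_
    simp
    field_simp
  rw [J, intervalIntegral.integral_eq_sub_of_hasDerivAt this
    (Continuous.intervalIntegrable (by fun_prop) _ _)]
  field_simp
  ring

lemma J_eq {T b : ℝ} (hT : 0 < T) (hb : b ≠ 0) : J T b = (1 - Real.cos (b * T)) / (b ^ 2 * T) := by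
  have : ∀ x ∈ Set.uIcc 0 T, HasDerivAt
      (fun ξ => (1 - ξ / T) * (Real.sin (b * ξ) / b) - Real.cos (b * ξ) / (b ^ 2 * T))
      ((1 - x / T) * Real.cos (b * x)) x := by
    intro x _
    have hm : HasDerivAt (fun ξ => b * ξ) b x := by
      simpa using (hasDerivAt_id x).const_mul b
    have h1 : HasDerivAt (fun ξ : ℝ => 1 - ξ / T) (-(1 / T)) x := by
      simpa using ((hasDerivAt_id x).div_const T).const_sub 1
    have h := (h1.mul (hm.sin.div_const b)).sub (hm.cos.div_const (b ^ 2 * T))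
    refine h.congr_deriv ?_
    field_simp
    ring
  rw [J, intervalIntegral.integral_eq_sub_of_hasDerivAt this
    (Continuous.intervalIntegrable (by fun_prop) _ _)]
  simp
  field_simp
  ring

lemma J_nonneg {T : ℝ} (hT : 0 < T) (b : ℝ) : 0 ≤ J T b := by
  by_cases hb : b = 0
  · rw [hb, J_zero hT]; positivity
  · rw [J_eq hT hb]
    have := Real.cos_le_one (b * T)
    apply div_nonneg (by linarith) (by positivity)

lemma J_le1 {T : ℝ} (hT : 0 < T) (b : ℝ) : J T b ≤ T / 2 := by
  rw [← J_zero hT, J, J]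
  refine intervalIntegral.integral_mono_on hT.le (Continuous.intervalIntegrable (by fun_prop) _ _)
    (Continuous.intervalIntegrable (by fun_prop) _ _) ?_
  intro x hx
  refine mul_le_mul_of_nonneg_left ?_ ?_
  · simpa using Real.cos_le_one _
  · rw [sub_nonneg, div_le_one hT]; exact hx.2

lemma J_le2 {T b : ℝ} (hT : 0 < T) (hb : b ≠ 0) : J T b ≤ 2 / (b ^ 2 * T) := by
  rw [J_eq hT hb]
  have := Real.neg_one_le_cos (b * T)
  gcongr
  linarith

lemma integral_fejer (a : Fin 3 → ℝ) (n : ℕ) (T : ℝ) :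
    ∫ ξ in (0:ℝ)..T, (1 - ξ / T) * R a n ξ =
      (9 ^ n : ℝ)⁻¹ * ∑ w ∈ W n, ∑ v ∈ W n, J T (pt a w - pt a v) := by
  have h : ∀ ξ, (1 - ξ / T) * R a n ξ = (9 ^ n : ℝ)⁻¹ * ∑ w ∈ W n, ∑ v ∈ W n,
      (1 - ξ / T) * Real.cos ((pt a w - pt a v) * ξ) := by
    intro ξ
    have h1 := norm_S a n ξ
    rw [norm_sq_sum] at h1
    simp only [← Finset.mul_sum]
    rw [h1]
    field_simp
  simp only [h]
  rw [intervalIntegral.integral_const_mul, intervalIntegral.integral_finsetSum]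
  · congr 1
    refine Finset.sum_congr rfl fun w _ => ?_
    rw [intervalIntegral.integral_finsetSum]
    · rfl
    · intro v _
      exact Continuous.intervalIntegrable (by fun_prop) _ _
  · intro v _
    exact Continuous.intervalIntegrable (by fun_prop) _ _

lemma lower (a : Fin 3 → ℝ) (n : ℕ) {T : ℝ} (hT : 0 < T) :
    T / (2 * 3 ^ n) ≤ ∫ ξ in (0:ℝ)..T, R a n ξ := by
  have hc := R_cont a n
  have h1 : ∫ ξ in (0:ℝ)..T, (1 - ξ / T) * R a n ξ ≤ ∫ ξ in (0:ℝ)..T, R a n ξ := by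
    refine intervalIntegral.integral_mono_on hT.le
      (Continuous.intervalIntegrable (by fun_prop) _ _)
      (Continuous.intervalIntegrable (by fun_prop) _ _) ?_
    intro x hx
    have h0 := R_nonneg a n x
    have : 0 ≤ x / T := div_nonneg hx.1 hT.le
    nlinarith
  refine le_trans ?_ h1
  rw [integral_fejer]
  have h2 : ∑ w ∈ W n, T / 2 ≤ ∑ w ∈ W n, ∑ v ∈ W n, J T (pt a w - pt a v) := by
    refine Finset.sum_le_sum fun w hw => ?_
    have := Finset.single_le_sum (f := fun v => J T (pt a w - pt a v))
      (fun v _ => J_nonneg hT _) hw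
    simpa [J_zero hT] using this
  rw [Finset.sum_const, card_W, nsmul_eq_mul] at h2
  calc T / (2 * 3 ^ n) = (9 ^ n : ℝ)⁻¹ * (((3 ^ n : ℕ) : ℝ) * (T / 2)) := by
        push_cast
        rw [show (9:ℝ) = 3 * 3 by norm_num, mul_pow]
        field_simp
    _ ≤ _ := mul_le_mul_of_nonneg_left h2 (by positivity)

lemma kernel_bound (n : ℕ) (s t : ℝ) :
    J (2 * 3 ^ n) (s - t) ≤ 3 ^ n * (5 / (1 + ((⌊3 ^ n * s⌋ - ⌊3 ^ n * t⌋ : ℤ) : ℝ) ^ 2)) := by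
  have h3 : (0:ℝ) < 3 ^ n := by positivity
  have hT : (0:ℝ) < 2 * 3 ^ n := by positivity
  set j : ℤ := ⌊3 ^ n * s⌋ - ⌊3 ^ n * t⌋ with hj
  by_cases h : |j| ≤ 1
  · have h1 : ((j:ℝ)) ^ 2 ≤ 1 := by
      have : j ^ 2 ≤ 1 := by rw [← sq_abs]; nlinarith [abs_nonneg j]
      exact_mod_cast this
    have := J_le1 hT (s - t)
    have h2 : (1:ℝ) ≤ 5 / (1 + (j:ℝ) ^ 2) := by
      rw [le_div_iff₀ (by positivity)]; linarith
    nlinarith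
  · push Not at h
    have hjr : (2:ℝ) ≤ |(j:ℝ)| := by exact_mod_cast (show (2:ℤ) ≤ |j| by omega)
    have e1 := Int.floor_le (3 ^ n * s)
    have e2 := Int.lt_floor_add_one (3 ^ n * s)
    have e3 := Int.floor_le (3 ^ n * t)
    have e4 := Int.lt_floor_add_one (3 ^ n * t)
    have hd : |(j:ℝ)| - 1 ≤ |3 ^ n * (s - t)| := by
      have : |(j:ℝ) - 3 ^ n * (s - t)| ≤ 1 := by
        rw [hj]; push_cast
        rw [abs_le]; constructor <;> linarith
      have := abs_sub_abs_le_abs_sub (j:ℝ) (3 ^ n * (s - t))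
      linarith
    have hne : s - t ≠ 0 := by
      intro h0
      rw [h0] at hd
      simp at hd
      linarith
    refine (J_le2 hT hne).trans ?_
    have hsq : (|(j:ℝ)| - 1) ^ 2 ≤ (3 ^ n * (s - t)) ^ 2 := by
      rw [← sq_abs (3 ^ n * (s - t))]
      exact pow_le_pow_left₀ (by linarith) hd 2
    have h5 : 1 + (j:ℝ) ^ 2 ≤ 5 * (3 ^ n * (s - t)) ^ 2 := by
      rw [← sq_abs (j:ℝ)]
      nlinarith
    have hp : 0 < (s - t) ^ 2 := by positivity
    rw [← mul_div_assoc, div_le_div_iff₀ (by positivity) (by positivity)]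
    calc 2 * (1 + (j:ℝ) ^ 2) ≤ 2 * (5 * (3 ^ n * (s - t)) ^ 2) := by linarith
      _ = _ := by ring

/-- summation constant -/
noncomputable def C0 : ℝ := ∑' j : ℤ, 5 / (1 + (j:ℝ) ^ 2)

lemma summ0 : Summable (fun j : ℤ => 5 / (1 + (j:ℝ) ^ 2)) := by
  have h : Summable (fun j : ℤ => 5 * (1 / (j:ℝ) ^ 2)) :=
    (Real.summable_one_div_int_pow.2 (by norm_num : 1 < 2)).mul_left 5
  refine (Summable.of_norm_bounded_eventually (g := fun j : ℤ => 5 * (1 / (j:ℝ) ^ 2)) h ?_)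
  have : ∀ᶠ j : ℤ in Filter.cofinite, j ≠ 0 :=
    (Set.finite_singleton (0:ℤ)).compl_mem_cofinite
  filter_upwards [this] with j hj
  have : (0:ℝ) < (j:ℝ) ^ 2 := by positivity
  rw [Real.norm_of_nonneg (by positivity), mul_one_div]
  gcongr
  linarith

lemma schur (s : Finset (List (Fin 3))) (β : List (Fin 3) → ℤ) :
    ∑ w ∈ s, ∑ v ∈ s, 5 / (1 + ((β w - β v : ℤ) : ℝ) ^ 2) ≤
      C0 * ∑ b ∈ s.image β, ((s.filter (fun w => β w = b)).card : ℝ) ^ 2 := by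
  set κ : ℤ → ℝ := fun j => 5 / (1 + (j:ℝ) ^ 2) with hκ
  set nb : ℤ → ℝ := fun b => ((s.filter (fun w => β w = b)).card : ℝ) with hnb
  have hcomp : ∀ F : ℤ → ℝ, ∑ w ∈ s, F (β w) = ∑ b ∈ s.image β, nb b * F b := by
    intro F
    rw [Finset.sum_comp]
    simp [hnb]
  have hsum : ∀ b, ∑ b' ∈ s.image β, κ (b - b') ≤ C0 := by
    intro b
    have : ∑ b' ∈ s.image β, κ (b - b') = ∑ c ∈ (s.image β).image (fun b' => b - b'), κ c := by
      refine (Finset.sum_image (s := s.image β) (g := fun b' => b - b') (f := κ) ?_).symm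
      intro x _ y _ h
      simpa using h
    rw [this]
    exact summ0.sum_le_tsum _ (fun j _ => by positivity)
  have h1 : ∑ w ∈ s, ∑ v ∈ s, κ (β w - β v) =
      ∑ b ∈ s.image β, ∑ b' ∈ s.image β, nb b * nb b' * κ (b - b') := by
    rw [hcomp (fun b => ∑ v ∈ s, κ (b - β v))]
    refine Finset.sum_congr rfl fun b _ => ?_
    rw [hcomp (fun b' => κ (b - b')), Finset.mul_sum]
    refine Finset.sum_congr rfl fun b' _ => ?_
    ring
  change ∑ w ∈ s, ∑ v ∈ s, κ (β w - β v) ≤ _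
  rw [h1]
  have hsymm : ∀ j, κ (-j) = κ j := by intro j; simp [hκ]
  have hκ0 : ∀ j, 0 ≤ κ j := fun j => by simp only [hκ]; positivity
  have h2 : ∑ b ∈ s.image β, ∑ b' ∈ s.image β, nb b * nb b' * κ (b - b') ≤
      ∑ b ∈ s.image β, ∑ b' ∈ s.image β, (nb b ^ 2 / 2 * κ (b - b') + nb b' ^ 2 / 2 * κ (b - b')) := by
    refine Finset.sum_le_sum fun b _ => Finset.sum_le_sum fun b' _ => ?_
    rw [← add_mul]
    refine mul_le_mul_of_nonneg_right ?_ (hκ0 _)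
    nlinarith [sq_nonneg (nb b - nb b')]
  refine h2.trans ?_
  have h3 : ∑ b ∈ s.image β, ∑ b' ∈ s.image β, nb b ^ 2 / 2 * κ (b - b') ≤
      ∑ b ∈ s.image β, nb b ^ 2 / 2 * C0 := by
    refine Finset.sum_le_sum fun b _ => ?_
    rw [← Finset.mul_sum]
    exact mul_le_mul_of_nonneg_left (hsum b) (by positivity)
  have h4 : ∑ b ∈ s.image β, ∑ b' ∈ s.image β, nb b' ^ 2 / 2 * κ (b - b') ≤
      ∑ b ∈ s.image β, nb b ^ 2 / 2 * C0 := by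
    rw [Finset.sum_comm]
    refine le_trans (le_of_eq ?_) h3
    refine Finset.sum_congr rfl fun b _ => Finset.sum_congr rfl fun b' _ => ?_
    rw [← hsymm (b' - b), neg_sub]
  simp only [Finset.sum_add_distrib]
  refine (add_le_add h3 h4).trans (le_of_eq ?_)
  rw [← Finset.sum_add_distrib, Finset.mul_sum]
  refine Finset.sum_congr rfl fun b _ => ?_
  ring

lemma bins (a : Fin 3 → ℝ) (n : ℕ) :
    ∑ b ∈ (W n).image (fun w => ⌊3 ^ n * pt a w⌋),
      (((W n).filter (fun w => ⌊3 ^ n * pt a w⌋ = b)).card : ℝ) ^ 2 ≤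
      3 ^ n * ∫ x, (cnt a n x : ℝ) ^ 2 := by
  have h3 : (0:ℝ) < 3 ^ n := by positivity
  set β : List (Fin 3) → ℤ := fun w => ⌊3 ^ n * pt a w⌋ with hβ
  set nb : ℤ → ℝ := fun b => (((W n).filter (fun w => β w = b)).card : ℝ) with hnb
  set A : ℤ → Set ℝ := fun b => Set.Ico (b / 3 ^ n : ℝ) ((b + 1) / 3 ^ n) with hA
  have hmem : ∀ b x, x ∈ A b ↔ ⌊3 ^ n * x⌋ = b := by
    intro b x
    rw [Int.floor_eq_iff, hA, Set.mem_Ico, div_le_iff₀ h3, lt_div_iff₀ h3, mul_comm x]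
  have hle : ∀ x, nb ⌊3 ^ n * x⌋ ≤ cnt a n x := by
    intro x
    simp only [hnb, cnt]
    refine Nat.cast_le.2 (Finset.card_le_card ?_)
    intro w
    simp only [Finset.mem_filter]
    rintro ⟨hw, hb⟩
    refine ⟨hw, ?_⟩
    have := Int.abs_sub_lt_one_of_floor_eq_floor hb
    rw [← mul_sub, abs_mul, abs_of_pos h3] at this
    rw [abs_sub_comm, ← one_div, le_div_iff₀ h3, mul_comm]
    exact this.le
  have hpt : ∀ x, ∑ b ∈ (W n).image β, (A b).indicator (fun _ => nb b ^ 2) x ≤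
      (cnt a n x : ℝ) ^ 2 := by
    intro x
    have : ∀ b ∈ (W n).image β, (A b).indicator (fun _ => nb b ^ 2) x =
        if ⌊3 ^ n * x⌋ = b then nb b ^ 2 else 0 := by
      intro b _
      by_cases hb : ⌊3 ^ n * x⌋ = b
      · rw [Set.indicator_of_mem ((hmem b x).2 hb), if_pos hb]
      · rw [Set.indicator_of_notMem (fun h => hb ((hmem b x).1 h)), if_neg hb]
    rw [Finset.sum_congr rfl this, Finset.sum_ite_eq]
    have h0 : (0:ℝ) ≤ nb ⌊3 ^ n * x⌋ := by simp only [hnb]; positivity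
    split_ifs
    · exact pow_le_pow_left₀ h0 (hle x) 2
    · positivity
  have hi : ∀ b ∈ (W n).image β, Integrable ((A b).indicator (fun _ => nb b ^ 2)) volume := by
    intro b _
    refine (integrable_indicator_iff measurableSet_Ico).2 ?_
    exact integrableOn_const measure_Ico_lt_top.ne
  have h1 := integral_mono (integrable_finsetSum _ hi) (cnt_sq_integrable a n) (by
    intro x
    simpa using hpt x)
  have h2 : ∫ x, (∑ b ∈ (W n).image β, (A b).indicator (fun _ => nb b ^ 2) x) =
      ∑ b ∈ (W n).image β, (3 ^ n : ℝ)⁻¹ * nb b ^ 2 := by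
    rw [integral_finsetSum _ hi]
    refine Finset.sum_congr rfl fun b _ => ?_
    rw [integral_indicator_const _ (show MeasurableSet (A b) from measurableSet_Ico)]
    simp only [hA, Measure.real, Real.volume_Ico, smul_eq_mul]
    rw [← sub_div, add_sub_cancel_left, ENNReal.toReal_ofReal (by positivity), one_div]
  rw [← Finset.mul_sum] at h2
  rw [h2, inv_mul_le_iff₀ h3] at h1
  exact h1

lemma upper (a : Fin 3 → ℝ) (n : ℕ) :
    ∫ ξ in (0:ℝ)..3 ^ n, R a n ξ ≤ 2 * C0 * ∫ x, (cnt a n x : ℝ) ^ 2 := by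
  have h3 : (0:ℝ) < 3 ^ n := by positivity
  have hc := R_cont a n
  set T : ℝ := 2 * 3 ^ n with hT
  have hT0 : 0 < T := by positivity
  have h1 : ∫ ξ in (0:ℝ)..3 ^ n, R a n ξ ≤ 2 * ∫ ξ in (0:ℝ)..T, (1 - ξ / T) * R a n ξ := by
    rw [← intervalIntegral.integral_const_mul]
    calc ∫ ξ in (0:ℝ)..3 ^ n, R a n ξ ≤ ∫ ξ in (0:ℝ)..3 ^ n, 2 * ((1 - ξ / T) * R a n ξ) := by
          refine intervalIntegral.integral_mono_on h3.le
            (Continuous.intervalIntegrable (by fun_prop) _ _)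
            (Continuous.intervalIntegrable (by fun_prop) _ _) ?_
          intro x hx
          have h0 := R_nonneg a n x
          have : x / T ≤ 1 / 2 := by
            rw [div_le_iff₀ hT0]
            linarith [hx.2]
          nlinarith
      _ ≤ ∫ ξ in (0:ℝ)..T, 2 * ((1 - ξ / T) * R a n ξ) := by
          refine intervalIntegral.integral_mono_interval le_rfl h3.le (by linarith) ?_
            (Continuous.intervalIntegrable (by fun_prop) _ _)
          refine (ae_restrict_iff' measurableSet_Ioc).2 (Filter.Eventually.of_forall ?_)
          intro x hx
          have h0 := R_nonneg a n x
          have : x / T ≤ 1 := by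
            rw [div_le_one hT0]; exact hx.2
          simp only [Pi.zero_apply]
          have : 0 ≤ 1 - x / T := by linarith
          positivity
  rw [integral_fejer] at h1
  have h2 : ∑ w ∈ W n, ∑ v ∈ W n, J T (pt a w - pt a v) ≤
      3 ^ n * ∑ w ∈ W n, ∑ v ∈ W n,
        5 / (1 + ((⌊3 ^ n * pt a w⌋ - ⌊3 ^ n * pt a v⌋ : ℤ) : ℝ) ^ 2) := by
    rw [Finset.mul_sum]
    refine Finset.sum_le_sum fun w _ => ?_
    rw [Finset.mul_sum]
    exact Finset.sum_le_sum fun v _ => kernel_bound n _ _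
  have h4 := schur (W n) (fun w => ⌊3 ^ n * pt a w⌋)
  have h5 := bins a n
  have hC : 0 ≤ C0 := tsum_nonneg fun j => by positivity
  calc _ ≤ _ := h1
    _ ≤ 2 * ((9 ^ n : ℝ)⁻¹ * (3 ^ n * (C0 * (3 ^ n * ∫ x, (cnt a n x : ℝ) ^ 2)))) := by
        gcongr
        refine h2.trans ?_
        gcongr
        refine h4.trans ?_
        gcongr
    _ = _ := by
        rw [show (9:ℝ) = 3 * 3 by norm_num, mul_pow]
        field_simp

end GF
namespace GF

lemma cube_bound {z w : ℂ} (hz : ‖z‖ = 1) (hw : ‖w‖ = 1) : ‖z ^ 3 - 1‖ ≤ 4 * ‖1 + z + w‖ := by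
  have hz1 : z * (starRingEnd ℂ) z = 1 := by
    rw [Complex.mul_conj, Complex.normSq_eq_norm_sq, hz]; simp
  have hw1 : w * (starRingEnd ℂ) w = 1 := by
    rw [Complex.mul_conj, Complex.normSq_eq_norm_sq, hw]; simp
  have h2 : z * w + z + w = z * w * (starRingEnd ℂ) (1 + z + w) := by
    simp only [map_add, map_one]
    linear_combination (-w) * hz1 - z * hw1
  have h3 : z ^ 3 - 1 = (1 + z + w) * (z ^ 2 - 1) - (z * w + z + w) * (z - 1) := by ring
  have h4 : ‖z * w + z + w‖ = ‖1 + z + w‖ := by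
    rw [h2, norm_mul, norm_mul, hz, hw, RCLike.norm_conj]; simp
  have h5 : ‖z ^ 2 - 1‖ ≤ 2 := by
    refine (norm_sub_le _ _).trans ?_
    rw [norm_pow, hz]; norm_num
  have h6 : ‖z - 1‖ ≤ 2 := by
    refine (norm_sub_le _ _).trans ?_
    rw [hz]; norm_num
  rw [h3]
  refine (norm_sub_le _ _).trans ?_
  rw [norm_mul, norm_mul, h4]
  nlinarith [norm_nonneg (1 + z + w)]

lemma cube_bound' {z : ℂ} (hz : ‖z‖ = 1) : ‖z ^ 3 - 1‖ ≤ 3 * ‖z - 1‖ := by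
  have h3 : z ^ 3 - 1 = (z ^ 2 + z + 1) * (z - 1) := by ring
  rw [h3, norm_mul]
  gcongr
  refine (norm_add₃_le).trans ?_
  rw [norm_pow, hz]; norm_num

/-- unit exponential -/
noncomputable def ex (t : ℝ) : ℂ := Complex.exp ((t : ℂ) * Complex.I)

lemma norm_ex (t : ℝ) : ‖ex t‖ = 1 := Complex.norm_exp_ofReal_mul_I t

lemma ex_three (t : ℝ) : ex t = ex (t / 3) ^ 3 := by
  unfold ex
  rw [← Complex.exp_nat_mul]
  congr 1
  push_cast
  ring

lemma ex_add (s t : ℝ) : ex (s + t) = ex s * ex t := by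
  unfold ex
  rw [← Complex.exp_add]
  congr 1
  push_cast
  ring

/-- distance-to-lattice proxy -/
noncomputable def sig (a : Fin 3 → ℝ) (y : ℝ) : ℝ :=
  max ‖ex ((a 0 - a 1) * y) - 1‖ ‖ex ((a 2 - a 1) * y) - 1‖

lemma sig_nonneg (a : Fin 3 → ℝ) (y : ℝ) : 0 ≤ sig a y := le_max_of_le_left (norm_nonneg _)

lemma Phi_eq (a : Fin 3 → ℝ) (y : ℝ) :
    Phi a y = ‖1 + ex ((a 0 - a 1) * y) + ex ((a 2 - a 1) * y)‖ / 3 := by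
  have : ∑ j : Fin 3, Complex.exp (((a j * y : ℝ) : ℂ) * Complex.I) =
      ex (a 1 * y) * (1 + ex ((a 0 - a 1) * y) + ex ((a 2 - a 1) * y)) := by
    rw [Fin.sum_univ_three, mul_add, mul_add, ← ex_add, ← ex_add]
    simp only [ex]
    ring_nf
  rw [Phi, this, norm_mul, norm_ex, one_mul]

lemma Phi_ge1 (a : Fin 3 → ℝ) (y : ℝ) : sig a y / 12 ≤ Phi a (y / 3) := by
  have h : sig a y ≤ 4 * (3 * Phi a (y / 3)) := by
    rw [Phi_eq]
    rw [mul_div_cancel₀ _ (by norm_num : (3:ℝ) ≠ 0)]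
    refine max_le ?_ ?_
    · rw [ex_three, mul_div_assoc]
      exact cube_bound (norm_ex _) (norm_ex _)
    · rw [ex_three, mul_div_assoc, add_right_comm]
      exact cube_bound (norm_ex _) (norm_ex _)
  linarith

lemma sig_le3 (a : Fin 3 → ℝ) (y : ℝ) : sig a y ≤ 3 * sig a (y / 3) := by
  refine max_le ?_ ?_
  · rw [ex_three, mul_div_assoc]
    exact (cube_bound' (norm_ex _)).trans (mul_le_mul_of_nonneg_left (le_max_left _ _) (by norm_num))
  · rw [ex_three, mul_div_assoc]
    exact (cube_bound' (norm_ex _)).trans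
      (mul_le_mul_of_nonneg_left (le_max_right _ _) (by norm_num))

lemma Phi_ge2 (a : Fin 3 → ℝ) (y : ℝ) : 1 - 2 / 3 * sig a y ≤ Phi a y := by
  rw [Phi_eq]
  set z := ex ((a 0 - a 1) * y)
  set w := ex ((a 2 - a 1) * y)
  have h1 : ‖z - 1‖ ≤ sig a y := le_max_left _ _
  have h2 : ‖w - 1‖ ≤ sig a y := le_max_right _ _
  have h3 : (3:ℝ) ≤ ‖1 + z + w‖ + ‖z - 1‖ + ‖w - 1‖ := by
    have h : (3:ℂ) = (1 + z + w) - (z - 1) - (w - 1) := by ring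
    have h' : ‖(3:ℂ)‖ = 3 := by simp
    rw [← h', h]
    exact (norm_sub_le _ _).trans (add_le_add_left (norm_sub_le _ _) _)
  linarith

lemma prod_low (a : Fin 3 → ℝ) (m : ℕ) (y : ℝ) :
    sig a y / (2 * 24 ^ m) ≤ ∏ k ∈ Finset.range m, Phi a (y / 3 ^ (k + 1)) := by
  induction m generalizing y with
  | zero =>
    have : sig a y ≤ 2 := by
      refine max_le ?_ ?_ <;>
      · refine (norm_sub_le _ _).trans ?_
        rw [norm_ex]; norm_num
    simp
    linarith
  | succ m ih =>
    rw [Finset.prod_range_succ']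
    have h := ih (y / 3)
    have e : ∏ k ∈ Finset.range m, Phi a (y / 3 ^ (k + 1 + 1)) =
        ∏ k ∈ Finset.range m, Phi a (y / 3 / 3 ^ (k + 1)) := by
      refine Finset.prod_congr rfl fun k _ => ?_
      rw [div_div, ← pow_succ']
    rw [e]
    simp only [zero_add, pow_one]
    have h1 := Phi_ge1 a y
    have h2 := sig_le3 a y
    have h3 := Phi_ge2 a (y / 3)
    have h0 := sig_nonneg a (y / 3)
    have h0' := sig_nonneg a y
    have hp : (0:ℝ) < 24 ^ m := by positivity
    refine le_trans ?_ (mul_le_mul_of_nonneg_right h (Phi_nonneg a (y / 3)))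
    rw [div_mul_eq_mul_div, div_le_div_iff₀ (by positivity) (by positivity), pow_succ]
    have key : sig a y ≤ 24 * (sig a (y / 3) * Phi a (y / 3)) := by
      by_cases hs : sig a (y / 3) ≤ 1 / 2
      · have : 2 / 3 ≤ Phi a (y / 3) := by linarith
        nlinarith
      · push Not at hs
        have : 0 ≤ Phi a (y / 3) := Phi_nonneg _ _
        nlinarith
    nlinarith

lemma R_low (a : Fin 3 → ℝ) (m : ℕ) (y : ℝ) : (sig a y / (2 * 24 ^ m)) ^ 2 ≤ R a m y := by
  rw [R, Finset.prod_pow]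
  have := sig_nonneg a y
  exact pow_le_pow_left₀ (by positivity) (prod_low a m y) 2

lemma sig_le {a : Fin 3 → ℝ} (ha : ∀ j, |a j| ≤ 1) (y : ℝ) : sig a y ≤ 2 * |y| := by
  have h : ∀ t : ℝ, ‖ex t - 1‖ ≤ |t| := by
    intro t
    have := Real.norm_exp_I_mul_ofReal_sub_one_le (x := t)
    rw [ex, mul_comm]
    simpa using this
  have h1 : ∀ i j, |a i - a j| ≤ 2 := fun i j =>
    (abs_sub _ _).trans (by linarith [ha i, ha j])
  refine max_le ((h _).trans ?_) ((h _).trans ?_) <;>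
  · rw [abs_mul]
    exact mul_le_mul_of_nonneg_right (h1 _ _) (abs_nonneg _)

lemma tail {a : Fin 3 → ℝ} (ha : ∀ j, |a j| ≤ 1) (M : ℕ) {y : ℝ} (hy : |y| ≤ 1) :
    1 / 9 ≤ R a M y := by
  have h : ∀ M : ℕ, 1 / 3 + 2 / 3 * ((3:ℝ) ^ M)⁻¹ ≤
      ∏ k ∈ Finset.range M, Phi a (y / 3 ^ (k + 1)) := by
    intro M
    induction M with
    | zero => norm_num
    | succ M ih =>
      rw [Finset.prod_range_succ]
      set t := ((3:ℝ) ^ M)⁻¹ with ht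
      have ht0 : 0 < t := by positivity
      have ht1 : t ≤ 1 := inv_le_one_of_one_le₀ (one_le_pow₀ (by norm_num))
      have e : ((3:ℝ) ^ (M + 1))⁻¹ = t / 3 := by rw [pow_succ, mul_inv]; ring
      rw [e]
      have h1 := Phi_ge2 a (y / 3 ^ (M + 1))
      have h2 := sig_le ha (y / 3 ^ (M + 1))
      rw [abs_div, abs_of_pos (by positivity : (0:ℝ) < 3 ^ (M + 1))] at h2
      have e2 : |y| / 3 ^ (M + 1) = |y| * (t / 3) := by rw [div_eq_mul_inv, e]
      rw [e2] at h2
      have h3 : |y| * (t / 3) ≤ 1 * (t / 3) := by gcongr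
      have h4 : 1 - 4 / 9 * t ≤ Phi a (y / 3 ^ (M + 1)) := by linarith
      calc _ ≤ (1 / 3 + 2 / 3 * t) * (1 - 4 / 9 * t) := by nlinarith
        _ ≤ _ := mul_le_mul ih h4 (by linarith) (le_trans (by positivity) ih)
  have h1 := h M
  rw [R, Finset.prod_pow]
  have h2 : (1/3:ℝ) ≤ ∏ k ∈ Finset.range M, Phi a (y / 3 ^ (k + 1)) := by
    refine le_trans ?_ h1
    have : (0:ℝ) ≤ 2 / 3 * ((3:ℝ) ^ M)⁻¹ := by positivity
    linarith
  calc (1/9:ℝ) = (1/3) ^ 2 := by norm_num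
    _ ≤ _ := pow_le_pow_left₀ (by norm_num) h2 2

lemma window {a : Fin 3 → ℝ} (ha : ∀ j, |a j| ≤ 1) {m n N : ℕ} (hN : n + m ≤ N) {η : ℝ}
    (hη : 0 ≤ η) (hgood : ∀ y, 1 ≤ y → y ≤ 3 ^ m → η ≤ sig a y)
    (hE : ∫ ξ in (0:ℝ)..3 ^ n, R a n ξ ≤ 3 ^ m / 4) :
    1 / 9 * (η / (2 * 24 ^ m)) ^ 2 * (3 ^ m / 4) ≤
      ∫ ξ in (3 ^ n : ℝ)..3 ^ (n + m), R a N ξ := by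
  have hc := R_cont a n
  have hcN := R_cont a N
  have hlow := lower a n (T := 3 ^ (n + m)) (by positivity)
  have e : (3:ℝ) ^ (n + m) / (2 * 3 ^ n) = 3 ^ m / 2 := by
    rw [pow_add]; field_simp
  rw [e] at hlow
  have hsplit := intervalIntegral.integral_add_adjacent_intervals (μ := volume) (f := R a n)
    (a := 0) (b := 3 ^ n) (c := 3 ^ (n + m)) (hc.intervalIntegrable _ _)
    (hc.intervalIntegrable _ _)
  have h1 : (3 ^ m / 4 : ℝ) ≤ ∫ ξ in (3 ^ n : ℝ)..3 ^ (n + m), R a n ξ := by linarith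
  have hle : (3:ℝ) ^ n ≤ 3 ^ (n + m) := pow_le_pow_right₀ (by norm_num) (by omega)
  calc _ ≤ 1 / 9 * (η / (2 * 24 ^ m)) ^ 2 * ∫ ξ in (3 ^ n : ℝ)..3 ^ (n + m), R a n ξ := by
        gcongr
    _ = ∫ ξ in (3 ^ n : ℝ)..3 ^ (n + m), 1 / 9 * (η / (2 * 24 ^ m)) ^ 2 * R a n ξ := by
        rw [intervalIntegral.integral_const_mul]
    _ ≤ _ := by
        refine intervalIntegral.integral_mono_on hle
          (Continuous.intervalIntegrable (by fun_prop) _ _) (hcN.intervalIntegrable _ _) ?_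
        intro ξ hξ
        obtain ⟨r, rfl⟩ := Nat.exists_eq_add_of_le hN
        have hp : (0:ℝ) < 3 ^ n := by positivity
        rw [R_add, R_add]
        have hξ0 : 0 < ξ := lt_of_lt_of_le hp hξ.1
        have ht := tail ha r (y := ξ / 3 ^ (n + m)) (by
          rw [abs_of_pos (by positivity), div_le_one (by positivity)]; exact hξ.2)
        have hl := R_low a m (ξ / 3 ^ n)
        have hg := hgood (ξ / 3 ^ n) (by rw [le_div_iff₀ hp]; linarith [hξ.1])
          (by rw [div_le_iff₀ hp, mul_comm, ← pow_add]; exact hξ.2)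
        have hl2 : (η / (2 * 24 ^ m)) ^ 2 ≤ R a m (ξ / 3 ^ n) := by
          refine le_trans ?_ hl
          gcongr
        have h0 := R_nonneg a n ξ
        calc 1 / 9 * (η / (2 * 24 ^ m)) ^ 2 * R a n ξ
            = R a n ξ * (η / (2 * 24 ^ m)) ^ 2 * (1 / 9) := by ring
          _ ≤ _ := by
            gcongr
            exact mul_nonneg h0 (R_nonneg _ _ _)

lemma windows {a : Fin 3 → ℝ} (ha : ∀ j, |a j| ≤ 1) {m Q : ℕ} {η : ℝ}
    (hη : 0 ≤ η) (hgood : ∀ y, 1 ≤ y → y ≤ 3 ^ m → η ≤ sig a y)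
    (hE : ∀ n ≤ Q * m, ∫ ξ in (0:ℝ)..3 ^ n, R a n ξ ≤ 3 ^ m / 4) :
    Q * (1 / 9 * (η / (2 * 24 ^ m)) ^ 2) ≤ 1 := by
  have hc := R_cont a (Q * m)
  have h : ∀ i ≤ Q, i * (1 / 9 * (η / (2 * 24 ^ m)) ^ 2 * (3 ^ m / 4)) ≤
      ∫ ξ in (0:ℝ)..3 ^ (i * m), R a (Q * m) ξ := by
    intro i
    induction i with
    | zero =>
      intro _
      have : (0:ℝ) ≤ ∫ ξ in (0:ℝ)..3 ^ (0 * m), R a (Q * m) ξ :=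
        intervalIntegral.integral_nonneg (by positivity) (fun x _ => R_nonneg _ _ _)
      simpa using this
    | succ i ih =>
      intro hi
      have h1 := ih (by omega)
      have hle : i * m + m ≤ Q * m := by
        calc i * m + m = (i + 1) * m := by ring
          _ ≤ _ := Nat.mul_le_mul_right _ hi
      have h2 := window ha (n := i * m) hle hη hgood (hE _ (by omega))
      have hsplit := intervalIntegral.integral_add_adjacent_intervals (μ := volume)
        (f := R a (Q * m))
        (a := 0) (b := 3 ^ (i * m)) (c := 3 ^ (i * m + m)) (hc.intervalIntegrable _ _)
        (hc.intervalIntegrable _ _)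
      rw [show (i + 1) * m = i * m + m by ring]
      push_cast
      linarith
  have h1 := (h Q le_rfl).trans (hE _ le_rfl)
  have h3 : (0:ℝ) < 3 ^ m / 4 := by positivity
  rw [← mul_assoc] at h1
  by_contra hcon
  push Not at hcon
  nlinarith

end GF
namespace GF

lemma near (t : ℝ) : ∃ k : ℤ, |t - k * Real.pi| ≤ Real.pi / 2 * |Real.sin t| ∧
    |t - k * Real.pi| ≤ Real.pi / 2 := by
  have hpi := Real.pi_pos
  refine ⟨round (t / Real.pi), ?_⟩
  set k := round (t / Real.pi)
  have h := abs_sub_round (t / Real.pi)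
  have h2 : |t - k * Real.pi| ≤ Real.pi / 2 := by
    have e : t - k * Real.pi = (t / Real.pi - k) * Real.pi := by field_simp
    rw [e, abs_mul, abs_of_pos hpi]
    nlinarith
  refine ⟨?_, h2⟩
  have h3 := Real.mul_abs_le_abs_sin h2
  have h4 : |Real.sin (t - k * Real.pi)| = |Real.sin t| := by
    rw [Real.sin_sub_int_mul_pi, abs_mul]
    rcases Int.emod_two_eq_zero_or_one k with hk | hk
    · simp [abs_zpow]
    · simp [abs_zpow]
  rw [h4] at h3
  have : |t - k * Real.pi| = Real.pi / 2 * (2 / Real.pi * |t - k * Real.pi|) := by field_simp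
  rw [this]
  gcongr

lemma near_ex (t : ℝ) : ∃ k : ℤ, |t - 2 * Real.pi * k| ≤ Real.pi / 2 * ‖ex t - 1‖ := by
  obtain ⟨k, hk, _⟩ := near (t / 2)
  refine ⟨k, ?_⟩
  have e : ‖ex t - 1‖ = 2 * |Real.sin (t / 2)| := by
    rw [ex, mul_comm, Complex.norm_exp_I_mul_ofReal_sub_one]
    simp
  rw [e]
  have e2 : t - 2 * Real.pi * k = 2 * (t / 2 - k * Real.pi) := by ring
  rw [e2, abs_mul, abs_two]
  linarith

lemma sector {A B η : ℝ} (hη : 0 ≤ η) (hAB : 3 / 4 ≤ A ^ 2 + B ^ 2) :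
    volume {θ : ℝ | θ ∈ Set.Icc 0 Real.pi ∧ |A * Real.cos θ + B * Real.sin θ| ≤ η} ≤
      ENNReal.ofReal (20 * η) := by
  have hpi := Real.pi_pos
  set z : ℂ := ⟨A, B⟩ with hz
  set ψ := z.arg
  have hc : ‖z‖ * Real.cos ψ = A := Complex.norm_mul_cos_arg z
  have hs : ‖z‖ * Real.sin ψ = B := Complex.norm_mul_sin_arg z
  have hn : 3 / 4 ≤ ‖z‖ ^ 2 := by
    have : ‖z‖ ^ 2 = A ^ 2 + B ^ 2 := by
      rw [← hc, ← hs]; linear_combination (-‖z‖ ^ 2) * (Real.sin_sq_add_cos_sq ψ)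
    rw [this]; exact hAB
  have hn2 : 43 / 50 ≤ ‖z‖ := by nlinarith [norm_nonneg z]
  have hsub : {θ : ℝ | θ ∈ Set.Icc 0 Real.pi ∧ |A * Real.cos θ + B * Real.sin θ| ≤ η} ⊆
      ⋃ k ∈ Finset.Icc (-2:ℤ) 2,
        Metric.closedBall (ψ + Real.pi / 2 + k * Real.pi) (2 * η) := by
    rintro θ ⟨⟨h0, h1⟩, h2⟩
    have e : A * Real.cos θ + B * Real.sin θ = - (‖z‖ * Real.sin (θ - ψ - Real.pi / 2)) := by
      rw [Real.sin_sub_pi_div_two, Real.cos_sub, ← hc, ← hs]; ring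
    rw [e, abs_neg, abs_mul, abs_norm] at h2
    obtain ⟨k, hk1, hk2⟩ := near (θ - ψ - Real.pi / 2)
    have hψ1 : -Real.pi < ψ := Complex.neg_pi_lt_arg z
    have hψ2 : ψ ≤ Real.pi := Complex.arg_le_pi z
    simp only [Set.mem_iUnion, Finset.mem_Icc, exists_prop]
    refine ⟨k, ⟨?_, ?_⟩, ?_⟩
    · rw [abs_le] at hk2
      by_contra hcon
      have : (k:ℝ) ≤ -3 := by exact_mod_cast (by omega : k ≤ -3)
      nlinarith
    · rw [abs_le] at hk2
      by_contra hcon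
      have : (3:ℝ) ≤ k := by exact_mod_cast (by omega : 3 ≤ k)
      nlinarith
    · rw [Metric.mem_closedBall, Real.dist_eq]
      have e2 : θ - (ψ + Real.pi / 2 + k * Real.pi) = θ - ψ - Real.pi / 2 - k * Real.pi := by ring
      rw [e2]
      have hs0 := abs_nonneg (Real.sin (θ - ψ - Real.pi / 2))
      have h3 : |Real.sin (θ - ψ - Real.pi / 2)| * (43 / 50) ≤ η := by nlinarith
      have := Real.pi_lt_d2
      nlinarith
  calc _ ≤ _ := measure_mono hsub
    _ ≤ ∑ k ∈ Finset.Icc (-2:ℤ) 2,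
        volume (Metric.closedBall (ψ + Real.pi / 2 + k * Real.pi) (2 * η)) :=
        measure_biUnion_finset_le _ _
    _ = ENNReal.ofReal (20 * η) := by
        simp only [Real.volume_closedBall, Finset.sum_const]
        rw [show (Finset.Icc (-2:ℤ) 2).card = 5 by rfl, ← ENNReal.ofReal_nsmul]
        congr 1
        simp; ring

/-- direction vector projections -/
noncomputable def av (θ : ℝ) (j : Fin 3) : ℝ :=
  Real.cos (Real.pi / 2 + 2 / 3 * Real.pi * ((j : ℕ) - 1 : ℝ) - θ)

lemma av_le (θ : ℝ) (j : Fin 3) : |av θ j| ≤ 1 := Real.abs_cos_le_one _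

lemma av1 (θ : ℝ) : av θ 1 = Real.sin θ := by
  simp [av, Real.cos_pi_div_two_sub]

lemma av0 (θ : ℝ) : av θ 0 = √3 / 2 * Real.cos θ - 1 / 2 * Real.sin θ := by
  have : av θ 0 = Real.cos (Real.pi / 6 + θ) := by
    rw [← Real.cos_neg]; simp only [av]; congr 1; norm_num; ring
  rw [this, Real.cos_add, Real.cos_pi_div_six, Real.sin_pi_div_six]

lemma av2 (θ : ℝ) : av θ 2 = - (√3 / 2 * Real.cos θ) - 1 / 2 * Real.sin θ := by
  have : av θ 2 = - Real.cos (Real.pi / 6 - θ) := by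
    rw [← Real.cos_add_pi]; simp only [av]; congr 1; norm_num; ring
  rw [this, Real.cos_sub, Real.cos_pi_div_six, Real.sin_pi_div_six]; ring

/-- index set of resonances -/
noncomputable def JJ (m : ℕ) : Finset (ℤ × ℤ) :=
  ((Finset.Icc (-3 ^ m : ℤ) (3 ^ m)) ×ˢ (Finset.Icc (-3 ^ m : ℤ) (3 ^ m))).filter
    (fun p => p ≠ (0, 0))

/-- bad directions -/
def Bad (m : ℕ) : Set ℝ :=
  ⋃ p ∈ JJ m, {θ : ℝ | θ ∈ Set.Icc 0 Real.pi ∧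
    |(√3 / 2 * (p.1 + p.2 : ℝ)) * Real.cos θ + (3 / 2 * (p.1 - p.2 : ℝ)) * Real.sin θ| ≤
      ((27:ℝ) ^ m)⁻¹}

lemma Bad_meas (m : ℕ) : MeasurableSet (Bad m) := by
  refine Finset.measurableSet_biUnion _ fun p _ => ?_
  have h : MeasurableSet {θ : ℝ | |(√3 / 2 * (p.1 + p.2 : ℝ)) * Real.cos θ +
      (3 / 2 * (p.1 - p.2 : ℝ)) * Real.sin θ| ≤ ((27:ℝ) ^ m)⁻¹} :=
    (isClosed_le (by fun_prop) (by fun_prop)).measurableSet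
  exact MeasurableSet.inter measurableSet_Icc h

lemma Bad_vol (m : ℕ) : volume (Bad m) ≤ ENNReal.ofReal (180 * ((3:ℝ) ^ m)⁻¹) := by
  have hq : (√3) ^ 2 = 3 := Real.sq_sqrt (by norm_num)
  calc volume (Bad m) ≤ ∑ p ∈ JJ m, _ := measure_biUnion_finset_le _ _
    _ ≤ ∑ p ∈ JJ m, ENNReal.ofReal (20 * ((27:ℝ) ^ m)⁻¹) := by
        refine Finset.sum_le_sum fun p hp => sector (by positivity) ?_
        have hp0 : p ≠ (0, 0) := (Finset.mem_filter.mp hp).2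
        have h1 : 1 ≤ p.1 ^ 2 + p.2 ^ 2 := by
          by_contra hcon
          have h1 : p.1 = 0 := by
            by_contra h
            nlinarith [Int.one_le_abs h, sq_abs p.1, sq_nonneg p.2]
          have h2 : p.2 = 0 := by
            by_contra h
            nlinarith [Int.one_le_abs h, sq_abs p.2, sq_nonneg p.1]
          exact hp0 (Prod.ext h1 h2)
        have h2 : 1 ≤ (p.1 + p.2) ^ 2 + (p.1 - p.2) ^ 2 := by nlinarith
        have h3 : (1:ℝ) ≤ (p.1 + p.2) ^ 2 + (p.1 - p.2) ^ 2 := by exact_mod_cast h2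
        rw [mul_pow, div_pow, hq]
        nlinarith [sq_nonneg ((p.1:ℝ) - p.2)]
    _ ≤ _ := by
        rw [Finset.sum_const, ← ENNReal.ofReal_nsmul]
        apply ENNReal.ofReal_le_ofReal
        have hcard : (JJ m).card ≤ 9 * 9 ^ m := by
          refine (Finset.card_filter_le _ _).trans ?_
          rw [Finset.card_product, Int.card_Icc]
          have : ((3:ℤ) ^ m + 1 - -3 ^ m).toNat ≤ 3 * 3 ^ m := by
            have : (1:ℤ) ≤ 3 ^ m := one_le_pow₀ (by norm_num)
            zify
            rw [Int.toNat_of_nonneg (by linarith)]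
            push_cast
            linarith
          calc _ ≤ (3 * 3 ^ m) * (3 * 3 ^ m) := Nat.mul_le_mul this this
            _ = _ := by rw [show (9:ℕ) = 3 * 3 by norm_num, mul_pow]; ring
        have hc : ((JJ m).card : ℝ) ≤ 9 * 9 ^ m := by exact_mod_cast hcard
        rw [nsmul_eq_mul]
        calc _ ≤ (9 * 9 ^ m) * (20 * ((27:ℝ) ^ m)⁻¹) := by gcongr
          _ = _ := by
            rw [show (27:ℝ) = 9 * 3 by norm_num, mul_pow]
            field_simp
            norm_num

lemma good {m : ℕ} (hm : 1 ≤ m) {θ : ℝ} (hθ : θ ∈ Set.Icc 0 Real.pi) (hB : θ ∉ Bad m)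
    (y : ℝ) (hy1 : 1 ≤ y) (hy2 : y ≤ 3 ^ m) : ((27:ℝ) ^ m)⁻¹ ≤ sig (av θ) y := by
  by_contra hcon
  push Not at hcon
  apply hB
  set η := ((27:ℝ) ^ m)⁻¹ with hη
  have hη0 : 0 < η := by positivity
  have hη1 : η ≤ 1 / 27 := by
    rw [hη, one_div]
    exact inv_anti₀ (by norm_num) (le_self_pow₀ (by norm_num) (by omega))
  have hpi := Real.pi_gt_three
  have hpi2 := Real.pi_lt_d2
  set p := av θ 0 - av θ 1 with hp
  set q := av θ 2 - av θ 1 with hq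
  have hp1 : ‖ex (p * y) - 1‖ ≤ η := (le_max_left _ _).trans hcon.le
  have hq1 : ‖ex (q * y) - 1‖ ≤ η := (le_max_right _ _).trans hcon.le
  obtain ⟨j, hj⟩ := near_ex (p * y)
  obtain ⟨l, hl⟩ := near_ex (q * y)
  replace hj : |p * y - 2 * Real.pi * j| ≤ Real.pi / 2 * η := hj.trans (by gcongr)
  replace hl : |q * y - 2 * Real.pi * l| ≤ Real.pi / 2 * η := hl.trans (by gcongr)
  have hpa : |p| ≤ 2 := (abs_sub _ _).trans (by linarith [av_le θ 0, av_le θ 1])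
  have hqa : |q| ≤ 2 := (abs_sub _ _).trans (by linarith [av_le θ 2, av_le θ 1])
  have hsq : (√3) ^ 2 = 3 := Real.sq_sqrt (by norm_num)
  have hpq : 3 / 2 ≤ p ^ 2 + q ^ 2 := by
    rw [hp, hq, av0, av1, av2]
    have e : (√3 / 2 * Real.cos θ - 1 / 2 * Real.sin θ - Real.sin θ) ^ 2 +
      (-(√3 / 2 * Real.cos θ) - 1 / 2 * Real.sin θ - Real.sin θ) ^ 2 =
      3 / 2 + 3 * Real.sin θ ^ 2 := by
      linear_combination (Real.cos θ ^ 2 / 2) * hsq + (3 / 2) * Real.sin_sq_add_cos_sq θ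
    rw [e]; nlinarith [sq_nonneg (Real.sin θ)]
  have h3m : (1:ℝ) ≤ 3 ^ m := one_le_pow₀ (by norm_num)
  have bd : ∀ (r : ℝ) (i : ℤ), |r| ≤ 2 → |r * y - 2 * Real.pi * i| ≤ Real.pi / 2 * η →
      i ∈ Finset.Icc (-3 ^ m : ℤ) (3 ^ m) := by
    intro r i hr hi
    have h1 : |r * y| ≤ 2 * 3 ^ m := by
      rw [abs_mul, abs_of_pos (by linarith : 0 < y)]
      exact mul_le_mul hr hy2 (by linarith) (by norm_num)
    have h2 : |(i:ℝ)| ≤ 3 ^ m := by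
      have h3 : |2 * Real.pi * (i:ℝ)| ≤ 2 * 3 ^ m + Real.pi / 2 * η := by
        have e : 2 * Real.pi * (i:ℝ) = r * y - (r * y - 2 * Real.pi * i) := by ring
        rw [e]
        exact (abs_sub _ _).trans (add_le_add h1 hi)
      rw [abs_mul, abs_of_pos (by positivity : 0 < 2 * Real.pi)] at h3
      nlinarith [abs_nonneg (i:ℝ)]
    rw [Finset.mem_Icc]
    rw [abs_le] at h2
    exact ⟨by exact_mod_cast h2.1, by exact_mod_cast h2.2⟩
  simp only [Bad, Set.mem_iUnion, exists_prop]
  refine ⟨(j, l), ?_, hθ, ?_⟩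
  · refine Finset.mem_filter.mpr ⟨Finset.mem_product.mpr ⟨bd p j hpa hj, bd q l hqa hl⟩, ?_⟩
    intro h0
    obtain ⟨rfl, rfl⟩ := Prod.mk.inj h0
    have small : ∀ r : ℝ, |r * y - 2 * Real.pi * ((0:ℤ):ℝ)| ≤ Real.pi / 2 * η → r ^ 2 ≤ 1 / 4 := by
      intro r hr
      simp only [Int.cast_zero, mul_zero, sub_zero, abs_mul] at hr
      rw [abs_of_pos (by linarith : 0 < y)] at hr
      have : |r| ≤ 1 / 2 := by nlinarith [abs_nonneg r]
      rw [← sq_abs]; nlinarith [abs_nonneg r]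
    linarith [small p hj, small q hl]
  · have e : √3 / 2 * ((j:ℝ) + l) * Real.cos θ + 3 / 2 * ((j:ℝ) - l) * Real.sin θ =
        p * l - q * j := by
      rw [hp, hq, av0, av1, av2]; ring
    simp only
    rw [e]
    have e2 : 2 * Real.pi * (p * l - q * j) =
        q * (p * y - 2 * Real.pi * j) - p * (q * y - 2 * Real.pi * l) := by ring
    have h1 : |2 * Real.pi * (p * l - q * j)| ≤ 2 * (Real.pi / 2 * η) + 2 * (Real.pi / 2 * η) := by
      rw [e2]
      refine (abs_sub _ _).trans ?_
      rw [abs_mul, abs_mul]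
      exact add_le_add (mul_le_mul hqa hj (abs_nonneg _) (by norm_num))
        (mul_le_mul hpa hl (abs_nonneg _) (by norm_num))
    rw [abs_mul, abs_of_pos (by positivity : 0 < 2 * Real.pi)] at h1
    nlinarith
end GF
namespace GF

lemma C0_ge : 5 ≤ C0 := by
  have h := summ0.le_tsum (0:ℤ) (fun j _ => by positivity)
  simpa [C0] using h

/-- base of the scale sequence -/
def PP : ℕ := 16428 * 9 * 4 * 648 ^ 4

lemma sq_le_four (m : ℕ) : m ^ 2 ≤ 4 ^ m := by
  have h : m ≤ 2 ^ m := Nat.lt_two_pow_self.le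
  calc m ^ 2 ≤ (2 ^ m) ^ 2 := Nat.pow_le_pow_left h 2
    _ = 4 ^ m := by rw [← pow_mul, mul_comm, pow_mul]; norm_num

lemma good_L {m : ℕ} (hm : 1 ≤ m) {θ : ℝ} (hθ : θ ∈ Set.Icc 0 Real.pi) (hB : θ ∉ Bad m)
    {n : ℕ} (hn : PP ^ m ≤ n) : L (av θ) n ≤ 2048 * C0 * ((3:ℝ) ^ m)⁻¹ := by
  have hC := C0_ge
  have ha := av_le θ
  have h3 : (0:ℝ) < 3 ^ m := by positivity
  set K : ℝ := 3 ^ m / (64 * C0) with hK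
  have hL2 : L (av θ) n ≤ 2 := by
    have := ENNReal.toReal_mono (by simp) (volume_U_le (av θ) n)
    simpa [L] using this
  by_cases hK1 : K ≤ 1
  · rw [hK, div_le_one (by positivity)] at hK1
    rw [← div_eq_mul_inv, le_div_iff₀ h3]
    nlinarith
  push Not at hK1
  have hK0 : 0 < K := by linarith
  have hK3 : K ≤ 3 ^ m := by
    rw [hK]; exact div_le_self h3.le (by linarith)
  set Q : ℕ := 37 * (648 ^ m) ^ 2 with hQ
  set N : ℕ := Q * m with hN
  have hN0 : 0 < N := by positivity
  have hNr : (0:ℝ) < N := by exact_mod_cast hN0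
  set ρ : ℝ := (H (av θ) K N).card / 3 ^ N with hρ
  have hρb : 1 < 12 * K * N * ρ := by
    by_contra hcon
    push Not at hcon
    have hE : ∀ k ≤ Q * m, ∫ ξ in (0:ℝ)..3 ^ k, R (av θ) k ξ ≤ 3 ^ m / 4 := by
      intro k hk
      have h1 := energy ha hK1 N hcon k hk
      refine (upper (av θ) k).trans ?_
      calc _ ≤ 2 * C0 * (8 * K) := by gcongr
        _ = _ := by rw [hK]; field_simp; norm_num
    have h := windows ha (η := ((27:ℝ) ^ m)⁻¹) (by positivity) (good hm hθ hB) hE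
    have e : (Q:ℝ) * (1 / 9 * (((27:ℝ) ^ m)⁻¹ / (2 * 24 ^ m)) ^ 2) = 37 / 36 := by
      rw [hQ]
      push_cast
      rw [show (648:ℝ) = 27 * 24 by norm_num, mul_pow]
      field_simp
      norm_num
    rw [e] at h
    norm_num at h
  set j : ℕ := 12 * 9 ^ m * N with hj
  have hjN : j * N ≤ n := by
    refine le_trans ?_ hn
    have h1 : j * N = 16428 * 9 ^ m * m ^ 2 * (648 ^ 4) ^ m := by
      rw [hj, hN, hQ, pow_right_comm 648 4 m]; generalize 648 ^ m = t; ring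
    rw [h1, PP, mul_pow, mul_pow, mul_pow]
    have h2 := sq_le_four m
    have h3 : 16428 ≤ 16428 ^ m := Nat.le_self_pow (by omega) _
    gcongr
  have hρ1 : ρ ≤ 1 := by
    classical
    rw [hρ, div_le_one (by positivity)]
    have : (H (av θ) K N).card ≤ 3 ^ N := by
      rw [← card_W]; exact Finset.card_le_card (Finset.filter_subset _ _)
    exact_mod_cast this
  have hiter := L_iter ha hK0 N j
  have hpow : (1 - ρ) ^ j ≤ 1 / K := by
    have h1 : (1 - ρ) ^ j ≤ Real.exp (-ρ) ^ j :=
      pow_le_pow_left₀ (by linarith) (Real.one_sub_le_exp_neg ρ) j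
    have h2 : Real.exp (-ρ) ^ j = 1 / Real.exp (j * ρ) := by
      rw [← Real.exp_nat_mul, one_div, ← Real.exp_neg]; congr 1; ring
    rw [h2] at h1
    refine h1.trans (one_div_le_one_div_of_le hK0 ?_)
    have h4 := Real.add_one_le_exp ((j:ℝ) * ρ)
    have h5 : K ≤ j * ρ := by
      have e : (j:ℝ) * ρ * K = 9 ^ m * (12 * K * N * ρ) := by
        rw [hj]; push_cast; ring
      have h9 : (9:ℝ) ^ m = 3 ^ m * 3 ^ m := by rw [← mul_pow]; norm_num
      have h6 : K * K ≤ j * ρ * K := by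
        rw [e, h9]
        have : K * K ≤ 3 ^ m * 3 ^ m := mul_le_mul hK3 hK3 hK0.le h3.le
        nlinarith
      exact le_of_mul_le_mul_right h6 hK0
    linarith
  have hmono : L (av θ) n ≤ L (av θ) (j * N) := by
    refine ENNReal.toReal_mono ?_ (measure_mono (U_step ha hjN))
    exact ne_top_of_le_ne_top (by simp) (volume_U_le _ _)
  calc _ ≤ 30 / K + 1 / K * 2 := by
        refine hmono.trans (hiter.trans ?_)
        gcongr
    _ = 32 / K := by ring
    _ = _ := by rw [hK]; field_simp; norm_num

lemma pt_ofFn (a : Fin 3 → ℝ) {n : ℕ} (f : Fin n → Fin 3) :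
    pt a (List.ofFn f) = ∑ k : Fin n, ((3:ℝ) ^ (k.1 + 1))⁻¹ * a (f k) := by
  induction n with
  | zero => simp [pt]
  | succ n ih =>
    rw [List.ofFn_succ, pt, ih, Fin.sum_univ_succ, add_div, Finset.sum_div]
    congr 1
    · simp; ring
    · refine Finset.sum_congr rfl fun k _ => ?_
      simp only [Fin.val_succ, pow_succ, mul_inv]
      ring

lemma proj_sub (θ : ℝ) (n : ℕ) : projDir θ (gasket n) ⊆ U (av θ) n := by
  rintro _ ⟨z, hz, rfl⟩
  simp only [gasket, Set.mem_iUnion, exists_prop, Set.mem_ofPred_eq] at hz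
  obtain ⟨α, hα, hz⟩ := hz
  have hex : ∀ k, ∃ i : Fin 3, (α k : ℝ) = ((i : ℕ) : ℝ) - 1 := by
    intro k
    rcases hα k with h | h | h
    · exact ⟨0, by rw [h]; norm_num⟩
    · exact ⟨1, by rw [h]; norm_num⟩
    · exact ⟨2, by rw [h]; norm_num⟩
  choose f hf using hex
  simp only [U, Set.mem_iUnion, exists_prop]
  refine ⟨List.ofFn f, mem_W.2 (by simp), mem_I.2 ?_⟩
  have hc : (Complex.exp (-(θ : ℂ) * Complex.I) * gasketCenter n α).re =
      pt (av θ) (List.ofFn f) := by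
    rw [pt_ofFn, gasketCenter, Finset.mul_sum, Complex.re_sum]
    refine Finset.sum_congr rfl fun k _ => ?_
    have e : Complex.exp (-(θ : ℂ) * Complex.I) * ((3 : ℂ) ^ (-(k.1 + 1 : ℤ)) *
        Complex.exp (Complex.I * (Real.pi : ℂ) * ((1/2 : ℂ) + (2/3 : ℂ) * (α k : ℂ)))) =
        ((((3:ℝ) ^ (k.1 + 1))⁻¹ : ℝ) : ℂ) * Complex.exp
          (((Real.pi / 2 + 2 / 3 * Real.pi * (α k : ℝ) - θ : ℝ) : ℂ) * Complex.I) := by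
      rw [mul_left_comm, ← Complex.exp_add, zpow_neg]
      congr 1
      · push_cast
        norm_cast
      · congr 1
        push_cast
        ring
    rw [e, Complex.re_ofReal_mul, Complex.exp_ofReal_mul_I_re, av, hf]
  rw [← hc, ← Complex.sub_re, ← mul_sub]
  refine (Complex.abs_re_le_norm _).trans ?_
  have h1 : ‖Complex.exp (-(θ : ℂ) * Complex.I)‖ = 1 := by
    have := Complex.norm_exp_ofReal_mul_I (-θ)
    simpa using this
  rw [norm_mul, h1, one_mul]
  rw [Metric.mem_ball, dist_eq_norm, zpow_neg, zpow_natCast] at hz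
  exact hz.le

lemma proj_le (θ : ℝ) (n : ℕ) : (volume (projDir θ (gasket n))).toReal ≤ L (av θ) n :=
  ENNReal.toReal_mono (ne_top_of_le_ne_top (by simp) (volume_U_le _ _))
    (measure_mono (proj_sub θ n))

lemma L_le_two (a : Fin 3 → ℝ) (n : ℕ) : L a n ≤ 2 := by
  have := ENNReal.toReal_mono (by simp) (volume_U_le a n)
  simpa [L] using this

lemma int_le {f g : ℝ → ℝ} (hg : IntervalIntegrable g volume 0 Real.pi)
    (hg0 : ∀ θ, 0 ≤ g θ) (h : ∀ θ ∈ Set.Icc 0 Real.pi, f θ ≤ g θ) :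
    ∫ θ in (0:ℝ)..Real.pi, f θ ≤ ∫ θ in (0:ℝ)..Real.pi, g θ := by
  by_cases hf : IntervalIntegrable f volume 0 Real.pi
  · exact intervalIntegral.integral_mono_on Real.pi_pos.le hf hg h
  · rw [intervalIntegral.integral_undef hf]
    exact intervalIntegral.integral_nonneg Real.pi_pos.le (fun θ _ => hg0 θ)

lemma fav_two (n : ℕ) : fav (gasket n) ≤ 2 := by
  have hpi := Real.pi_pos
  have h := int_le (f := fun θ => (volume (projDir θ (gasket n))).toReal) (g := fun _ => 2)
    (by simp) (by simp) (fun θ _ => (proj_le θ n).trans (L_le_two _ _))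
  rw [intervalIntegral.integral_const] at h
  rw [fav]
  calc _ ≤ 1 / Real.pi * ((Real.pi - 0) • (2:ℝ)) := by gcongr
    _ = 2 := by rw [smul_eq_mul]; field_simp; ring

lemma fav_scale {m n : ℕ} (hm : 1 ≤ m) (hn : PP ^ m ≤ n) :
    fav (gasket n) ≤ (2048 * C0 + 360) * ((3:ℝ) ^ m)⁻¹ := by
  have hpi := Real.pi_pos
  have hC := C0_ge
  set D : ℝ := 2048 * C0 * ((3:ℝ) ^ m)⁻¹ with hD
  have hD0 : 0 ≤ D := by positivity
  have hfin : volume (Bad m) ≠ ⊤ := ne_top_of_le_ne_top ENNReal.ofReal_ne_top (Bad_vol m)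
  have hvr : (volume (Bad m)).toReal ≤ 180 * ((3:ℝ) ^ m)⁻¹ := by
    have := ENNReal.toReal_mono ENNReal.ofReal_ne_top (Bad_vol m)
    rwa [ENNReal.toReal_ofReal (by positivity)] at this
  have hind : Integrable ((Bad m).indicator (fun _ => (2:ℝ))) volume :=
    (integrable_indicator_iff (Bad_meas m)).2 (integrableOn_const hfin)
  have hind0 : ∀ θ, 0 ≤ (Bad m).indicator (fun _ => (2:ℝ)) θ :=
    fun θ => Set.indicator_nonneg (fun _ _ => by norm_num) θ
  have h := int_le (f := fun θ => (volume (projDir θ (gasket n))).toReal)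
    (g := fun θ => D + (Bad m).indicator (fun _ => (2:ℝ)) θ)
    (IntervalIntegrable.add (by simp) hind.intervalIntegrable)
    (fun θ => add_nonneg hD0 (hind0 θ))
    (by
      intro θ hθ
      refine (proj_le θ n).trans ?_
      by_cases hB : θ ∈ Bad m
      · rw [Set.indicator_of_mem hB]; linarith [L_le_two (av θ) n]
      · rw [Set.indicator_of_notMem hB, add_zero]
        exact good_L hm hθ hB hn)
  rw [intervalIntegral.integral_add (by simp) hind.intervalIntegrable,
    intervalIntegral.integral_const] at h
  have h2 : ∫ θ in (0:ℝ)..Real.pi, (Bad m).indicator (fun _ => (2:ℝ)) θ ≤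
      360 * ((3:ℝ) ^ m)⁻¹ := by
    rw [intervalIntegral.integral_of_le hpi.le]
    refine (setIntegral_le_integral hind (Filter.Eventually.of_forall hind0)).trans ?_
    rw [integral_indicator (Bad_meas m), setIntegral_const, smul_eq_mul, Measure.real]
    linarith
  have h3 : ∫ θ in (0:ℝ)..Real.pi, (volume (projDir θ (gasket n))).toReal ≤
      Real.pi * D + 360 * ((3:ℝ) ^ m)⁻¹ := by
    rw [smul_eq_mul] at h
    linarith
  rw [fav, one_div, ← div_eq_inv_mul, div_le_iff₀ hpi]
  have h4 : 360 * ((3:ℝ) ^ m)⁻¹ ≤ 360 * ((3:ℝ) ^ m)⁻¹ * Real.pi :=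
    le_mul_of_one_le_right (by positivity) (by linarith [Real.pi_gt_three])
  calc _ ≤ Real.pi * D + 360 * ((3:ℝ) ^ m)⁻¹ * Real.pi := by linarith
    _ = _ := by rw [hD]; ring

lemma fav_all (n m : ℕ) (hn : PP ^ m ≤ n) :
    fav (gasket n) ≤ (2048 * C0 + 360) * ((3:ℝ) ^ m)⁻¹ := by
  rcases Nat.eq_zero_or_pos m with rfl | hm
  · have := C0_ge
    have := fav_two n
    simp only [pow_zero, inv_one, mul_one]
    linarith
  · exact fav_scale hm hn

end GF

/-- There exist `p > 0` and `C > 0` such that `Fav(G_n) ≤ C·n^{-p}` for all `n ≥ 1`. -/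
theorem gasket_favard_power_law :
    ∃ p > (0:ℝ), ∃ C > (0:ℝ), ∀ n : ℕ, 1 ≤ n →
      fav (gasket n) ≤ C * (n : ℝ) ^ (-p) := by
  have hC := GF.C0_ge
  have hP1 : 1 < GF.PP := by unfold GF.PP; norm_num
  have hPr : (1:ℝ) < (GF.PP : ℝ) := by exact_mod_cast hP1
  have hlogP : 0 < Real.log (GF.PP : ℝ) := Real.log_pos hPr
  have hlog3 : 0 < Real.log 3 := Real.log_pos (by norm_num)
  set p : ℝ := Real.log 3 / Real.log (GF.PP : ℝ) with hp
  have hp0 : 0 < p := div_pos hlog3 hlogP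
  refine ⟨p, hp0, 3 * (2048 * GF.C0 + 360), by linarith, ?_⟩
  intro n hn
  have hnr : (0:ℝ) < n := by exact_mod_cast hn
  set m := Nat.log GF.PP n with hm
  have h1 : GF.PP ^ m ≤ n := Nat.pow_log_le_self _ (by omega)
  have h2 : n < GF.PP ^ (m + 1) := Nat.lt_pow_succ_log_self hP1 n
  have h2r : (n:ℝ) ≤ (GF.PP : ℝ) ^ (m + 1) := by exact_mod_cast h2.le
  have hPp : (GF.PP : ℝ) ^ p = 3 := by
    rw [Real.rpow_def_of_pos (by linarith), hp, mul_div_cancel₀ _ hlogP.ne',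
      Real.exp_log (by norm_num)]
  have h3 : (n:ℝ) ^ p ≤ 3 ^ (m + 1) := by
    calc (n:ℝ) ^ p ≤ ((GF.PP : ℝ) ^ (m + 1)) ^ p := Real.rpow_le_rpow hnr.le h2r hp0.le
      _ = ((GF.PP : ℝ) ^ p) ^ (m + 1) := by
        rw [← Real.rpow_natCast, ← Real.rpow_natCast, ← Real.rpow_mul (by linarith),
          ← Real.rpow_mul (by linarith), mul_comm]
      _ = _ := by rw [hPp]
  have h4 : ((3:ℝ) ^ m)⁻¹ ≤ 3 * (n:ℝ) ^ (-p) := by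
    rw [Real.rpow_neg hnr.le]
    have h5 : ((3:ℝ) ^ (m + 1))⁻¹ ≤ ((n:ℝ) ^ p)⁻¹ := inv_anti₀ (Real.rpow_pos_of_pos hnr _) h3
    rw [pow_succ, mul_inv] at h5
    linarith
  calc _ ≤ _ := GF.fav_all n m h1
    _ ≤ (2048 * GF.C0 + 360) * (3 * (n:ℝ) ^ (-p)) := by gcongr
    _ = _ := by ring
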